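/- Let 1 < p < ∞ and let f ∈ L^p([0,1]²) satisfy J_p(f) < ∞ and I_p(f) < ∞. Then f is equal almost everywhere to a continuous function, and there exists an absolute constant A > 0 (independent of p and f) such that ‖f‖_∞ ≤ A[‖f‖_p + (1/(p·p'))·J_p(f) + (1/(p·p'))²·I_p(f)]. -/

import Mathlib

open MeasureTheory Filter Set
open scoped ENNReal

noncomputable section

/-- A function of two real variables that is 1-periodic in each variable. -/
def BiPeriodic (f : ℝ → ℝ → ℝ) : Prop :=
  (∀ x y, f (x + 1) y = f x y) ∧ (∀ x y, f x (y + 1) = f x y)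

/-- A 1-periodic function of one real variable. -/
def Periodic1 (g : ℝ → ℝ) : Prop := ∀ x, g (x + 1) = g x

/-- The `L^p` norm of a function over `[0,1]^2` (as a value in `[0,∞]`). -/
noncomputable def lpNorm2 (p : ℝ) (f : ℝ → ℝ → ℝ) : ℝ≥0∞ :=
  (∫⁻ x in Set.Icc (0:ℝ) 1, ∫⁻ y in Set.Icc (0:ℝ) 1,
      ENNReal.ofReal (|f x y| ^ p)) ^ (1 / p)

/-- The `L^p` norm of a function over `[0,1]` (as a value in `[0,∞]`). -/
noncomputable def lpNorm1 (p : ℝ) (g : ℝ → ℝ) : ℝ≥0∞ :=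
  (∫⁻ x in Set.Icc (0:ℝ) 1, ENNReal.ofReal (|g x| ^ p)) ^ (1 / p)

/-- Membership in `L^p([0,1]^2)`: measurable, 1-periodic in each variable,
finite `L^p` norm. -/
def MemLp2 (p : ℝ) (f : ℝ → ℝ → ℝ) : Prop :=
  Measurable (Function.uncurry f) ∧ BiPeriodic f ∧ lpNorm2 p f < ⊤

/-- Membership in `L^p([0,1])` for 1-periodic functions of one variable. -/
def MemLp1 (p : ℝ) (g : ℝ → ℝ) : Prop :=
  Measurable g ∧ Periodic1 g ∧ lpNorm1 p g < ⊤

/-- The (total) `L^p` modulus of continuity `ω(f;δ)_p` of a bivariate function. -/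
noncomputable def modulus2 (p : ℝ) (f : ℝ → ℝ → ℝ) (δ : ℝ) : ℝ≥0∞ :=
  ⨆ (h : ℝ × ℝ) (_ : Real.sqrt (h.1 ^ 2 + h.2 ^ 2) ≤ δ),
    lpNorm2 p (fun x y => f (x + h.1) (y + h.2) - f x y)

/-- The `L^p` modulus of continuity `ω(g;δ)_p` of a univariate function. -/
noncomputable def modulus1 (p : ℝ) (g : ℝ → ℝ) (δ : ℝ) : ℝ≥0∞ :=
  ⨆ (h : ℝ) (_ : h ∈ Set.Icc 0 δ), lpNorm1 p (fun x => g (x + h) - g x)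

/-- The mixed `L^p` modulus of continuity `ω(f;u,v)_p`. -/
noncomputable def mixedModulus (p : ℝ) (f : ℝ → ℝ → ℝ) (u v : ℝ) : ℝ≥0∞ :=
  ⨆ (s : ℝ) (_ : s ∈ Set.Icc 0 u) (t : ℝ) (_ : t ∈ Set.Icc 0 v),
    lpNorm2 p (fun x y => f (x + s) (y + t) - f (x + s) y - f x (y + t) + f x y)

/-- `J_p(f) = ∫₀¹ t^{-1/p} ω(f;t)_p dt/t`. -/
noncomputable def Jp (p : ℝ) (f : ℝ → ℝ → ℝ) : ℝ≥0∞ :=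
  ∫⁻ t in Set.Ioc (0:ℝ) 1, ENNReal.ofReal (t ^ (-(1/p)) / t) * modulus2 p f t

/-- `K_p(f) = ∫₀¹ t^{-1/p} [ω(f;t,1)_p + ω(f;1,t)_p] dt/t`. -/
noncomputable def Kp (p : ℝ) (f : ℝ → ℝ → ℝ) : ℝ≥0∞ :=
  ∫⁻ t in Set.Ioc (0:ℝ) 1,
    ENNReal.ofReal (t ^ (-(1/p)) / t) * (mixedModulus p f t 1 + mixedModulus p f 1 t)

/-- `I_p(f) = ∫₀¹∫₀¹ (uv)^{-1/p} ω(f;u,v)_p (du/u)(dv/v)`. -/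
noncomputable def Ip (p : ℝ) (f : ℝ → ℝ → ℝ) : ℝ≥0∞ :=
  ∫⁻ u in Set.Ioc (0:ℝ) 1, ∫⁻ v in Set.Ioc (0:ℝ) 1,
    ENNReal.ofReal ((u * v) ^ (-(1/p)) / (u * v)) * mixedModulus p f u v

/-- The essential supremum norm of `f` over `[0,1]^2`. -/
noncomputable def supNorm2 (f : ℝ → ℝ → ℝ) : ℝ≥0∞ :=
  essSup (fun z : ℝ × ℝ => ENNReal.ofReal |f z.1 z.2|)
    (volume.restrict ((Set.Icc (0:ℝ) 1) ×ˢ (Set.Icc (0:ℝ) 1)))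

/-- The Wiener `p`-variation of a 1-periodic function `g`, as a value in `[0,∞]`:
the supremum over partitions `x₀ < x₁ < ... < xₙ = x₀ + 1` of
`(∑ |g(x_{k+1}) - g(x_k)|^p)^{1/p}`. -/
noncomputable def vp (p : ℝ) (g : ℝ → ℝ) : ℝ≥0∞ :=
  ⨆ (n : ℕ) (x : ℕ → ℝ) (_ : ∀ i < n, x i < x (i + 1)) (_ : x n = x 0 + 1),
    ENNReal.ofReal ((∑ k ∈ Finset.range n, |g (x (k + 1)) - g (x k)| ^ p) ^ (1 / p))

/-- The Hardy–Vitali type total `p`-variation of a bivariate function,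
as a value in `[0,∞]`: the supremum over nets of
`(∑∑ |Δf(x_i,y_j)|^p)^{1/p}`. -/
noncomputable def vp2 (p : ℝ) (f : ℝ → ℝ → ℝ) : ℝ≥0∞ :=
  ⨆ (m : ℕ) (n : ℕ) (x : ℕ → ℝ) (y : ℕ → ℝ)
    (_ : ∀ i < m, x i < x (i + 1)) (_ : x m = x 0 + 1)
    (_ : ∀ j < n, y j < y (j + 1)) (_ : y n = y 0 + 1),
    ENNReal.ofReal ((∑ i ∈ Finset.range m, ∑ j ∈ Finset.range n,
      |f (x (i + 1)) (y (j + 1)) - f (x (i + 1)) (y j)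
        - f (x i) (y (j + 1)) + f (x i) (y j)| ^ p) ^ (1 / p))

/-- Membership in the Hardy class `H_p^{(2)}`: finite Vitali `p`-variation and
all linear sections of bounded `p`-variation. -/
def MemHp2 (p : ℝ) (f : ℝ → ℝ → ℝ) : Prop :=
  vp2 p f < ⊤ ∧ (∀ x, vp p (fun y => f x y) < ⊤) ∧ (∀ y, vp p (fun x => f x y) < ⊤)

/-- Membership in the mixed norm class `V_p[V_p]`: all sections have bounded
`p`-variation and the functions `x ↦ v_p(f_x)`, `y ↦ v_p(f_y)` are themselves
of bounded `p`-variation. -/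
def MemVpVp (p : ℝ) (f : ℝ → ℝ → ℝ) : Prop :=
  (∀ x, vp p (fun y => f x y) < ⊤) ∧ (∀ y, vp p (fun x => f x y) < ⊤) ∧
  vp p (fun x => (vp p (fun y => f x y)).toReal) < ⊤ ∧
  vp p (fun y => (vp p (fun x => f x y)).toReal) < ⊤

/-- `W_p(f) = v_p(φ_p[f]) + v_p(ψ_p[f])`, where `φ_p[f](x) = v_p(f_x)` and
`ψ_p[f](y) = v_p(f_y)`. -/
noncomputable def Wp (p : ℝ) (f : ℝ → ℝ → ℝ) : ℝ≥0∞ :=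
  vp p (fun x => (vp p (fun y => f x y)).toReal)
    + vp p (fun y => (vp p (fun x => f x y)).toReal)

/-- Membership in `L^p_0([0,1]^2)`: membership in `L^p([0,1]^2)` together with
vanishing of the linear mean values `∫₀¹ f(x,t) dt` and `∫₀¹ f(t,y) dt` for a.e.
`x` resp. `y`. -/
def MemLp20 (p : ℝ) (f : ℝ → ℝ → ℝ) : Prop :=
  MemLp2 p f ∧ (∀ᵐ x : ℝ ∂volume, ∫ t in (0:ℝ)..1, f x t = 0) ∧
    (∀ᵐ y : ℝ ∂volume, ∫ t in (0:ℝ)..1, f t y = 0)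

/-- `T` is a trigonometric polynomial of degree `(n,m)` in two variables. -/
def IsTrigPoly2 (n m : ℕ) (T : ℝ → ℝ → ℝ) : Prop :=
  ∃ a b c d : ℕ → ℕ → ℝ, ∀ x y : ℝ,
    T x y = ∑ j ∈ Finset.range (n + 1), ∑ k ∈ Finset.range (m + 1),
      (a j k * Real.cos (2 * Real.pi * j * x) * Real.cos (2 * Real.pi * k * y)
        + b j k * Real.cos (2 * Real.pi * j * x) * Real.sin (2 * Real.pi * k * y)
        + c j k * Real.sin (2 * Real.pi * j * x) * Real.cos (2 * Real.pi * k * y)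
        + d j k * Real.sin (2 * Real.pi * j * x) * Real.sin (2 * Real.pi * k * y))

end

/-!
The function `f` is recovered as the limit of its Steklov means over rectangles with sides
`N⁻ᵏ × N⁻ˡ`: by Lebesgue differentiation the diagonal means (`k = l`) converge to `f` almost
everywhere, and telescoping in both indices writes them as the mean at unit scale plus two edge
sums plus a double sum of mixed differences. Hölder's inequality bounds each increment, uniformly
in the base point, by a power of the scale times a modulus of continuity, and summing over the
scales yields `J_p` along the edges and `I_p` in the interior.

Dyadic scales would lose the factors `1 / (p p')`. To get them with an absolute constant, `N` is
chosen with `N ^ (1 / p) ∈ [2, 4]` when `p ≥ 2` and with `N ^ (1 - 1 / p) ∈ [2, 4]` when `p ≤ 2`.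
In the second case a difference of step `i * s` with `i < N`, averaged at scale `s`, is first
replaced by a difference of step `s` averaged at scale `N * s`.
-/

noncomputable section

open Function (uncurry)

variable {f : ℝ → ℝ → ℝ} {p : ℝ}

/-! ### The periodic `L^p` norm and finite differences -/

theorem lintegral_Icc_comp_add_right {g : ℝ → ℝ≥0∞} (hg : Function.Periodic g 1) (a : ℝ) :
    ∫⁻ x in Icc (0 : ℝ) 1, g (x + a) = ∫⁻ x in Icc (0 : ℝ) 1, g x := by
  have period_eq : ∫⁻ x in Ioc a (a + 1), g x = ∫⁻ x in Ioc (0 : ℝ) (0 + 1), g x := by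
    refine (isAddFundamentalDomain_Ioc one_pos a volume).setLIntegral_eq
      (isAddFundamentalDomain_Ioc one_pos 0 volume) g ?_
    rintro ⟨c, hc⟩ x
    obtain ⟨n, rfl⟩ := AddSubgroup.mem_zmultiples_iff.1 hc
    simpa [AddSubgroup.vadd_def, add_comm] using hg.zsmul n x
  have translate_eq : ∫⁻ x in Ioc (0 : ℝ) 1, g (x + a) = ∫⁻ x in Ioc a (a + 1), g x := by
    rw [← (measurePreserving_add_right volume a).setLIntegral_comp_preimage_emb
      (measurableEmbedding_addRight a) g]
    simp
  rw [setLIntegral_congr Ioc_ae_eq_Icc.symm, setLIntegral_congr Ioc_ae_eq_Icc.symm,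
    translate_eq, period_eq, zero_add]

theorem lpNorm2_translate (p : ℝ) (hf : BiPeriodic f) (a b : ℝ) :
    lpNorm2 p (fun x y => f (x + a) (y + b)) = lpNorm2 p f := by
  have inner_eq (x : ℝ) := lintegral_Icc_comp_add_right
    (g := fun y => ENNReal.ofReal (|f x y| ^ p)) (fun y => by simp only [hf.2]) b
  have outer_eq := lintegral_Icc_comp_add_right
    (g := fun x => ∫⁻ y in Icc (0 : ℝ) 1, ENNReal.ofReal (|f x y| ^ p))
    (fun x => by simp only [hf.1]) a
  simp only [lpNorm2, inner_eq, outer_eq]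

/-- The half-open rectangle with lower left corner `(x, y)` and side lengths `s` and `t`. -/
def box (s t x y : ℝ) : Set (ℝ × ℝ) := Ioc x (x + s) ×ˢ Ioc y (y + t)

theorem measurableSet_box (s t x y : ℝ) : MeasurableSet (box s t x y) :=
  measurableSet_Ioc.prod measurableSet_Ioc

theorem volume_box {s t : ℝ} (hs : 0 ≤ s) (x y : ℝ) :
    volume (box s t x y) = ENNReal.ofReal (s * t) := by
  simp [box, Measure.volume_eq_prod, ENNReal.ofReal_mul hs]

theorem preimage_add_right_box (s t x y a b : ℝ) :
    (fun z : ℝ × ℝ => z + (a, b)) ⁻¹' box s t (x + a) (y + b) = box s t x y := by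
  ext z
  simp only [box, mem_preimage, mem_prod, mem_Ioc, Prod.fst_add, Prod.snd_add,
    add_right_comm _ _ s, add_right_comm _ _ t, add_lt_add_iff_right, add_le_add_iff_right]

theorem lpNorm2_eq_eLpNorm (hp : 0 < p) (hf : Measurable (uncurry f)) :
    lpNorm2 p f
      = eLpNorm (uncurry f) (ENNReal.ofReal p) (volume.restrict (box 1 1 0 0)) := by
  have restrict_eq : volume.restrict (box 1 1 0 0)
      = (volume.restrict (Icc (0 : ℝ) 1)).prod (volume.restrict (Icc (0 : ℝ) 1)) := by
    rw [box, zero_add, Measure.volume_eq_prod, ← Measure.prod_restrict,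
      restrict_Ioc_eq_restrict_Icc]
  rw [eLpNorm_eq_lintegral_rpow_enorm_toReal (by simpa using hp) ENNReal.ofReal_ne_top,
    ENNReal.toReal_ofReal hp.le, restrict_eq, lintegral_prod _ (by fun_prop), lpNorm2]
  simp only [Function.uncurry_apply_pair, Real.enorm_eq_ofReal_abs,
    ENNReal.ofReal_rpow_of_nonneg (abs_nonneg _) hp.le]

theorem measurable_translate (hf : Measurable (uncurry f)) (a b : ℝ) :
    Measurable (uncurry fun x y => f (x + a) (y + b)) :=
  hf.comp (by fun_prop : Measurable fun z : ℝ × ℝ => z + (a, b))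

theorem lpNorm2_eq_eLpNorm_box (hp : 0 < p) (hf : Measurable (uncurry f)) (hper : BiPeriodic f)
    (a b : ℝ) :
    lpNorm2 p f
      = eLpNorm (uncurry f) (ENNReal.ofReal p) (volume.restrict (box 1 1 a b)) := by
  have shift := (measurePreserving_add_right (volume : Measure (ℝ × ℝ)) (a, b)).restrict_preimage
    (measurableSet_box 1 1 (0 + a) (0 + b))
  rw [preimage_add_right_box, zero_add, zero_add] at shift
  rw [← lpNorm2_translate p hper a b,
    ← eLpNorm_comp_measurePreserving hf.aestronglyMeasurable shift]
  exact lpNorm2_eq_eLpNorm hp (measurable_translate hf a b)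

/-- The first difference of `f` with step `(a, b)`. The mixed difference of the paper is
`Δ(s,t)f = shiftDiff 0 t (shiftDiff s 0 f)`. -/
def shiftDiff (a b : ℝ) (f : ℝ → ℝ → ℝ) : ℝ → ℝ → ℝ :=
  fun x y => f (x + a) (y + b) - f x y

theorem shiftDiff_comm (a b a' b' : ℝ) (f : ℝ → ℝ → ℝ) :
    shiftDiff a b (shiftDiff a' b' f) = shiftDiff a' b' (shiftDiff a b f) := by
  funext x y
  simp only [shiftDiff, add_right_comm _ a a', add_right_comm _ b b']
  ring

theorem shiftDiff_nat_mul (n : ℕ) (a b : ℝ) (f : ℝ → ℝ → ℝ) (x y : ℝ) :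
    shiftDiff (n * a) (n * b) f x y
      = ∑ l ∈ Finset.range n, shiftDiff a b f (x + l * a) (y + l * b) := by
  have telescope := Finset.sum_range_sub (fun l : ℕ => f (x + l * a) (y + l * b)) n
  simp only [Nat.cast_add_one, add_one_mul, ← add_assoc, Nat.cast_zero, zero_mul, add_zero]
    at telescope
  exact telescope.symm

theorem measurable_shiftDiff (hf : Measurable (uncurry f)) (a b : ℝ) :
    Measurable (uncurry (shiftDiff a b f)) :=
  (measurable_translate hf a b).sub hf

theorem BiPeriodic.shiftDiff (hf : BiPeriodic f) (a b : ℝ) : BiPeriodic (shiftDiff a b f) := by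
  constructor <;> intro x y <;>
    simp only [_root_.shiftDiff, add_right_comm _ (1 : ℝ), hf.1, hf.2]

theorem lpNorm2_shiftDiff_le (hp : 1 ≤ p) (hf : Measurable (uncurry f)) (hper : BiPeriodic f)
    (a b : ℝ) : lpNorm2 p (shiftDiff a b f) ≤ 2 * lpNorm2 p f := by
  have hp₀ : 0 < p := one_pos.trans_le hp
  have hshift := measurable_translate hf a b
  calc lpNorm2 p (shiftDiff a b f)
      ≤ lpNorm2 p (fun x y => f (x + a) (y + b)) + lpNorm2 p f := by
        rw [lpNorm2_eq_eLpNorm hp₀ hshift, lpNorm2_eq_eLpNorm hp₀ hf,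
          lpNorm2_eq_eLpNorm hp₀ (measurable_shiftDiff hf a b)]
        exact eLpNorm_sub_le hshift.aestronglyMeasurable hf.aestronglyMeasurable
          (ENNReal.one_le_ofReal.2 hp)
    _ = 2 * lpNorm2 p f := by rw [lpNorm2_translate p hper, two_mul]

theorem lpNorm2_shiftDiff_nat_mul_le (hp : 1 ≤ p) (hf : Measurable (uncurry f))
    (hper : BiPeriodic f) (n : ℕ) (a b : ℝ) :
    lpNorm2 p (shiftDiff (n * a) (n * b) f) ≤ n * lpNorm2 p (shiftDiff a b f) := by
  have hp₀ : 0 < p := one_pos.trans_le hp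
  have hshift (l : ℕ) := measurable_translate (measurable_shiftDiff hf a b) (l * a) (l * b)
  have hsum : uncurry (shiftDiff (n * a) (n * b) f) = ∑ l ∈ Finset.range n,
      uncurry fun x y => shiftDiff a b f (x + l * a) (y + l * b) := by
    ext z
    simp only [uncurry, shiftDiff_nat_mul, Finset.sum_apply]
  calc lpNorm2 p (shiftDiff (n * a) (n * b) f)
      ≤ ∑ l ∈ Finset.range n, lpNorm2 p fun x y => shiftDiff a b f (x + l * a) (y + l * b) := by
        rw [lpNorm2_eq_eLpNorm hp₀ (measurable_shiftDiff hf _ _), hsum]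
        simp only [lpNorm2_eq_eLpNorm hp₀ (hshift _)]
        exact eLpNorm_sum_le (fun l _ => (hshift l).aestronglyMeasurable)
          (ENNReal.one_le_ofReal.2 hp)
    _ = n * lpNorm2 p (shiftDiff a b f) := by
        simp only [lpNorm2_translate p (hper.shiftDiff a b), Finset.sum_const, Finset.card_range,
          nsmul_eq_mul]

/-! ### Moduli of continuity -/

/-- Abstract moduli of continuity: nondecreasing functions growing at most linearly under
dilation by positive integers. -/
structure IsModulus (φ : ℝ → ℝ≥0∞) : Prop where
  mono : Monotone φ
  map_nat_mul_le (n : ℕ) (hn : n ≠ 0) (t : ℝ) : φ (n * t) ≤ n * φ t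

theorem lpNorm2_shiftDiff_le_modulus2 (p : ℝ) (f : ℝ → ℝ → ℝ) {a b δ : ℝ}
    (h : √(a ^ 2 + b ^ 2) ≤ δ) : lpNorm2 p (shiftDiff a b f) ≤ modulus2 p f δ :=
  le_iSup₂_of_le (a, b) h le_rfl

theorem modulus2_le {δ : ℝ} {B : ℝ≥0∞}
    (h : ∀ a b, √(a ^ 2 + b ^ 2) ≤ δ → lpNorm2 p (shiftDiff a b f) ≤ B) : modulus2 p f δ ≤ B :=
  iSup₂_le fun z hz => h z.1 z.2 hz

theorem shiftDiff_snd_shiftDiff_fst (s t : ℝ) (f : ℝ → ℝ → ℝ) :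
    shiftDiff 0 t (shiftDiff s 0 f)
      = fun x y => f (x + s) (y + t) - f (x + s) y - f x (y + t) + f x y := by
  funext x y
  simp only [shiftDiff, add_zero]
  ring

theorem lpNorm2_shiftDiff_le_mixedModulus (p : ℝ) (f : ℝ → ℝ → ℝ) {s t u v : ℝ}
    (hs : s ∈ Icc 0 u) (ht : t ∈ Icc 0 v) :
    lpNorm2 p (shiftDiff 0 t (shiftDiff s 0 f)) ≤ mixedModulus p f u v := by
  rw [shiftDiff_snd_shiftDiff_fst]
  exact le_iSup₂_of_le s hs (le_iSup₂_of_le t ht le_rfl)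

theorem mixedModulus_le {u v : ℝ} {B : ℝ≥0∞}
    (h : ∀ s ∈ Icc 0 u, ∀ t ∈ Icc 0 v, lpNorm2 p (shiftDiff 0 t (shiftDiff s 0 f)) ≤ B) :
    mixedModulus p f u v ≤ B := by
  simp only [shiftDiff_snd_shiftDiff_fst] at h
  exact iSup₂_le fun s hs => iSup₂_le (h s hs)

theorem mixedModulus_mono (p : ℝ) (f : ℝ → ℝ → ℝ) {u u' v v' : ℝ} (hu : u ≤ u') (hv : v ≤ v') :
    mixedModulus p f u v ≤ mixedModulus p f u' v' :=
  mixedModulus_le fun _ hs _ ht =>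
    lpNorm2_shiftDiff_le_mixedModulus p f (Icc_subset_Icc_right hu hs) (Icc_subset_Icc_right hv ht)

theorem modulus2_le_lpNorm2 (hp : 1 ≤ p) (hf : Measurable (uncurry f))
    (hper : BiPeriodic f) (δ : ℝ) :
    modulus2 p f δ ≤ 2 * lpNorm2 p f :=
  modulus2_le fun a b _ => lpNorm2_shiftDiff_le hp hf hper a b

theorem isModulus_modulus2 (hp : 1 ≤ p) (hf : Measurable (uncurry f))
    (hper : BiPeriodic f) :
    IsModulus (modulus2 p f) where
  mono _ _ hst := modulus2_le fun _ _ hab => lpNorm2_shiftDiff_le_modulus2 p f (hab.trans hst)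
  map_nat_mul_le n hn t := modulus2_le fun a b hab => by
    have hn' : (0 : ℝ) < n := Nat.cast_pos.2 (Nat.pos_of_ne_zero hn)
    have hnorm : √((a / n) ^ 2 + (b / n) ^ 2) ≤ t := by
      rwa [div_pow, div_pow, ← add_div, Real.sqrt_div (by positivity), Real.sqrt_sq hn'.le,
        div_le_iff₀' hn']
    calc lpNorm2 p (shiftDiff a b f)
        ≤ n * lpNorm2 p (shiftDiff (a / n) (b / n) f) := by
          simpa only [mul_div_cancel₀ _ hn'.ne'] using
            lpNorm2_shiftDiff_nat_mul_le hp hf hper n (a / n) (b / n)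
      _ ≤ n * modulus2 p f t := by gcongr; exact lpNorm2_shiftDiff_le_modulus2 p f hnorm

theorem isModulus_mixedModulus_snd (hp : 1 ≤ p) (hf : Measurable (uncurry f))
    (hper : BiPeriodic f) (u : ℝ) :
    IsModulus (mixedModulus p f u) where
  mono _ _ hst := mixedModulus_mono p f le_rfl hst
  map_nat_mul_le n hn v := mixedModulus_le fun s hs t ht => by
    have hn' : (0 : ℝ) < n := Nat.cast_pos.2 (Nat.pos_of_ne_zero hn)
    have ht' : t / n ∈ Icc 0 v := ⟨div_nonneg ht.1 hn'.le, (div_le_iff₀' hn').2 ht.2⟩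
    calc lpNorm2 p (shiftDiff 0 t (shiftDiff s 0 f))
        ≤ n * lpNorm2 p (shiftDiff 0 (t / n) (shiftDiff s 0 f)) := by
          simpa only [mul_div_cancel₀ _ hn'.ne', mul_zero] using
            lpNorm2_shiftDiff_nat_mul_le hp (measurable_shiftDiff hf s 0) (hper.shiftDiff s 0)
              n 0 (t / n)
      _ ≤ n * mixedModulus p f u v := by
          gcongr; exact lpNorm2_shiftDiff_le_mixedModulus p f hs ht'

theorem isModulus_mixedModulus_fst (hp : 1 ≤ p) (hf : Measurable (uncurry f))
    (hper : BiPeriodic f) (v : ℝ) :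
    IsModulus fun u => mixedModulus p f u v where
  mono _ _ hst := mixedModulus_mono p f hst le_rfl
  map_nat_mul_le n hn u := mixedModulus_le fun s hs t ht => by
    have hn' : (0 : ℝ) < n := Nat.cast_pos.2 (Nat.pos_of_ne_zero hn)
    have hs' : s / n ∈ Icc 0 u := ⟨div_nonneg hs.1 hn'.le, (div_le_iff₀' hn').2 hs.2⟩
    calc lpNorm2 p (shiftDiff 0 t (shiftDiff s 0 f))
        ≤ n * lpNorm2 p (shiftDiff 0 t (shiftDiff (s / n) 0 f)) := by
          simpa only [mul_div_cancel₀ _ hn'.ne', mul_zero, shiftDiff_comm 0 t] using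
            lpNorm2_shiftDiff_nat_mul_le hp (measurable_shiftDiff hf 0 t) (hper.shiftDiff 0 t)
              n (s / n) 0
      _ ≤ n * mixedModulus p f u v := by
          gcongr; exact lpNorm2_shiftDiff_le_mixedModulus p f hs' ht

theorem mixedModulus_le_modulus2_fst (hp : 1 ≤ p) (hf : Measurable (uncurry f))
    (hper : BiPeriodic f) (u v : ℝ) :
    mixedModulus p f u v ≤ 2 * modulus2 p f u :=
  mixedModulus_le fun s hs t _ => by
    refine (lpNorm2_shiftDiff_le hp (measurable_shiftDiff hf s 0) (hper.shiftDiff s 0) 0 t).trans ?_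
    gcongr
    exact lpNorm2_shiftDiff_le_modulus2 p f (by simpa [Real.sqrt_sq hs.1] using hs.2)

theorem mixedModulus_le_modulus2_snd (hp : 1 ≤ p) (hf : Measurable (uncurry f))
    (hper : BiPeriodic f) (u v : ℝ) :
    mixedModulus p f u v ≤ 2 * modulus2 p f v :=
  mixedModulus_le fun s _ t ht => by
    rw [shiftDiff_comm]
    refine (lpNorm2_shiftDiff_le hp (measurable_shiftDiff hf 0 t) (hper.shiftDiff 0 t) s 0).trans ?_
    gcongr
    exact lpNorm2_shiftDiff_le_modulus2 p f (by simpa [Real.sqrt_sq ht.1] using ht.2)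

theorem mixedModulus_le_lpNorm2 (hp : 1 ≤ p) (hf : Measurable (uncurry f))
    (hper : BiPeriodic f) (u v : ℝ) :
    mixedModulus p f u v ≤ 4 * lpNorm2 p f :=
  calc mixedModulus p f u v ≤ 2 * modulus2 p f u := mixedModulus_le_modulus2_fst hp hf hper u v
    _ ≤ 2 * (2 * lpNorm2 p f) := by
        gcongr
        exact modulus2_le_lpNorm2 hp hf hper u
    _ = 4 * lpNorm2 p f := by ring

theorem IsModulus.div_two_mul_le {φ : ℝ → ℝ≥0∞} (hφ : IsModulus φ) {t T : ℝ} (ht : 0 < t)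
    (htT : t ≤ T) : ENNReal.ofReal (t / (2 * T)) * φ T ≤ φ t := by
  have hT : 0 < T := ht.trans_le htT
  set n := ⌈T / t⌉₊
  have hn : n ≠ 0 := (Nat.ceil_pos.2 (div_pos hT ht)).ne'
  have hT_le : T ≤ n * t := (div_le_iff₀ ht).1 (Nat.le_ceil _)
  have hn_le : (n : ℝ) ≤ 2 * (T / t) := by
    linarith [Nat.ceil_lt_add_one (div_pos hT ht).le, (one_le_div ht).2 htT]
  calc ENNReal.ofReal (t / (2 * T)) * φ T
      ≤ ENNReal.ofReal (t / (2 * T)) * (n * φ t) := by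
        gcongr
        exact (hφ.mono hT_le).trans (hφ.map_nat_mul_le n hn t)
    _ = ENNReal.ofReal (t / (2 * T) * n) * φ t := by
        rw [ENNReal.ofReal_mul (by positivity), ENNReal.ofReal_natCast, mul_assoc]
    _ ≤ 1 * φ t := by
        gcongr
        rw [ENNReal.ofReal_le_one]
        calc t / (2 * T) * n ≤ t / (2 * T) * (2 * (T / t)) := by gcongr
          _ = 1 := by field_simp
    _ = φ t := one_mul _

/-! ### Discretization of the weighted integrals -/

/-- The weighted integral `∫₀¹ t^{-θ} φ(t) dt/t`. -/
def weightedIntegral (θ : ℝ) (φ : ℝ → ℝ≥0∞) : ℝ≥0∞ :=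
  ∫⁻ t in Ioc (0 : ℝ) 1, ENNReal.ofReal (t ^ (-θ) / t) * φ t

theorem weightedIntegral_mono (θ : ℝ) {φ ψ : ℝ → ℝ≥0∞} (h : ∀ t, φ t ≤ ψ t) :
    weightedIntegral θ φ ≤ weightedIntegral θ ψ :=
  lintegral_mono fun t => mul_le_mul_right (h t) _

theorem weightedIntegral_const_mul (θ : ℝ) {c : ℝ≥0∞} (hc : c ≠ ⊤) (φ : ℝ → ℝ≥0∞) :
    weightedIntegral θ (fun t => c * φ t) = c * weightedIntegral θ φ := by
  rw [weightedIntegral, weightedIntegral, ← lintegral_const_mul' _ _ hc]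
  exact lintegral_congr fun t => mul_left_comm _ _ _

theorem isModulus_weightedIntegral (θ : ℝ) {ω : ℝ → ℝ → ℝ≥0∞}
    (hω : ∀ v, IsModulus fun u => ω u v) : IsModulus fun u => weightedIntegral θ (ω u) where
  mono _ _ hst := weightedIntegral_mono θ fun v => (hω v).mono hst
  map_nat_mul_le n hn u := by
    rw [← weightedIntegral_const_mul θ (ENNReal.natCast_ne_top n)]
    exact weightedIntegral_mono θ fun v => (hω v).map_nat_mul_le n hn u

theorem Jp_eq_weightedIntegral (p : ℝ) (f : ℝ → ℝ → ℝ) :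
    Jp p f = weightedIntegral (1 / p) (modulus2 p f) := rfl

theorem Ip_eq_weightedIntegral (p : ℝ) (f : ℝ → ℝ → ℝ) :
    Ip p f = weightedIntegral (1 / p) fun u => weightedIntegral (1 / p) (mixedModulus p f u) := by
  refine setLIntegral_congr_fun measurableSet_Ioc fun u hu => ?_
  simp only [weightedIntegral]
  rw [← lintegral_const_mul' _ _ ENNReal.ofReal_ne_top]
  refine setLIntegral_congr_fun measurableSet_Ioc fun v hv => ?_
  have hu₀ : 0 < u := hu.1
  have hv₀ : 0 < v := hv.1
  rw [Real.mul_rpow hu₀.le hv₀.le, mul_div_mul_comm, ENNReal.ofReal_mul (by positivity), mul_assoc]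

theorem lintegral_Ioc_rpow {a b r : ℝ} (ha : 0 < a) (hab : a ≤ b) (hr : r ≠ -1) :
    ∫⁻ t in Ioc a b, ENNReal.ofReal (t ^ r)
      = ENNReal.ofReal ((b ^ (r + 1) - a ^ (r + 1)) / (r + 1)) := by
  have h0 : (0 : ℝ) ∉ uIcc a b := by
    rw [uIcc_of_le hab]
    exact fun h => ha.not_ge h.1
  rw [← integral_rpow (Or.inr ⟨hr, h0⟩), intervalIntegral.integral_of_le hab,
    ofReal_integral_eq_lintegral_ofReal]
  · exact (intervalIntegrable_iff_integrableOn_Ioc_of_le hab).1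
      (intervalIntegral.intervalIntegrable_rpow (Or.inr h0))
  · filter_upwards [ae_restrict_mem measurableSet_Ioc] with t ht
    exact Real.rpow_nonneg (ha.trans ht.1).le _

theorem rpow_sub_mul_le_lintegral {φ : ℝ → ℝ≥0∞} (hφ : Monotone φ) {θ a b : ℝ} (hθ : 0 < θ)
    (ha : 0 < a) (hab : a ≤ b) :
    ENNReal.ofReal (a ^ (-θ) - b ^ (-θ)) * φ a
      ≤ ENNReal.ofReal θ * ∫⁻ t in Ioc a b, ENNReal.ofReal (t ^ (-θ) / t) * φ t := by
  have weight_eq : ∫⁻ t in Ioc a b, ENNReal.ofReal (t ^ (-θ) / t)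
      = ENNReal.ofReal ((a ^ (-θ) - b ^ (-θ)) / θ) := by
    rw [← neg_div_neg_eq, neg_sub, ← neg_add_cancel_right (-θ) 1, ← sub_eq_add_neg _ (1 : ℝ),
      ← lintegral_Ioc_rpow ha hab (by linarith)]
    refine setLIntegral_congr_fun measurableSet_Ioc fun t ht => ?_
    simp only [sub_add_cancel, Real.rpow_sub_one (ha.trans ht.1).ne']
  calc ENNReal.ofReal (a ^ (-θ) - b ^ (-θ)) * φ a
      = ENNReal.ofReal θ * ∫⁻ t in Ioc a b, ENNReal.ofReal (t ^ (-θ) / t) * φ a := by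
        rw [lintegral_mul_const _ (by fun_prop), weight_eq, ← mul_assoc, ← ENNReal.ofReal_mul hθ.le,
          mul_div_cancel₀ _ hθ.ne']
    _ ≤ _ := by
        gcongr ENNReal.ofReal θ * ?_
        exact setLIntegral_mono' measurableSet_Ioc fun t ht => mul_le_mul_right (hφ ht.1.le) _

theorem IsModulus.rpow_sub_mul_le_lintegral {φ : ℝ → ℝ≥0∞} (hφ : IsModulus φ) {θ a b : ℝ}
    (hθ : θ < 1) (ha : 0 < a) (hab : a ≤ b) :
    ENNReal.ofReal ((b ^ (1 - θ) - a ^ (1 - θ)) / (2 * b)) * φ b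
      ≤ ENNReal.ofReal (1 - θ) * ∫⁻ t in Ioc a b, ENNReal.ofReal (t ^ (-θ) / t) * φ t := by
  have hb : 0 < b := ha.trans_le hab
  have hθ' : 0 < 1 - θ := sub_pos.2 hθ
  calc ENNReal.ofReal ((b ^ (1 - θ) - a ^ (1 - θ)) / (2 * b)) * φ b
      = ENNReal.ofReal (1 - θ) * ∫⁻ t in Ioc a b,
          ENNReal.ofReal (t ^ (-θ)) * (ENNReal.ofReal (1 / (2 * b)) * φ b) := by
        rw [lintegral_mul_const _ (by fun_prop), lintegral_Ioc_rpow ha hab (by linarith),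
          neg_add_eq_sub, ← mul_assoc, ← mul_assoc, ← ENNReal.ofReal_mul hθ'.le,
          mul_div_cancel₀ _ hθ'.ne', ← ENNReal.ofReal_mul' (by positivity), mul_one_div]
    _ ≤ _ := by
        gcongr ENNReal.ofReal (1 - θ) * ?_
        refine setLIntegral_mono' measurableSet_Ioc fun t ht => ?_
        have ht₀ : 0 < t := ha.trans ht.1
        calc ENNReal.ofReal (t ^ (-θ)) * (ENNReal.ofReal (1 / (2 * b)) * φ b)
            = ENNReal.ofReal (t ^ (-θ) / t) * (ENNReal.ofReal (t / (2 * b)) * φ b) := by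
              rw [← mul_assoc, ← mul_assoc, ← ENNReal.ofReal_mul (by positivity),
                ← ENNReal.ofReal_mul (by positivity), div_mul_div_cancel₀ ht₀.ne', mul_one_div]
          _ ≤ _ := by
              gcongr
              exact hφ.div_two_mul_le ht₀ ht.2

/-- The side lengths `N⁻ᵏ` at which Steklov means are taken. -/
def scale (N k : ℕ) : ℝ := ((N : ℝ) ^ k)⁻¹

theorem scale_zero (N : ℕ) : scale N 0 = 1 := by simp [scale]

theorem scale_rpow_neg (N k : ℕ) (θ : ℝ) : scale N k ^ (-θ) = ((N : ℝ) ^ θ) ^ k := by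
  rw [scale, Real.inv_rpow (by positivity), Real.rpow_neg (by positivity), inv_inv,
    ← Real.rpow_natCast, ← Real.rpow_natCast, ← Real.rpow_mul (by positivity),
    ← Real.rpow_mul (by positivity), mul_comm]

theorem scale_pos {N : ℕ} (hN : N ≠ 0) (k : ℕ) : 0 < scale N k := by
  have : (0 : ℝ) < N := Nat.cast_pos.2 (Nat.pos_of_ne_zero hN)
  exact inv_pos.2 (by positivity)

theorem nat_mul_scale_succ {N : ℕ} (hN : N ≠ 0) (k : ℕ) : N * scale N (k + 1) = scale N k := by
  have : (N : ℝ) ≠ 0 := Nat.cast_ne_zero.2 hN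
  rw [scale, scale, pow_succ', mul_inv, mul_inv_cancel_left₀ this]

theorem scale_antitone {N : ℕ} (hN : N ≠ 0) : Antitone (scale N) := fun j k hjk => by
  have : (1 : ℝ) ≤ N := Nat.one_le_cast.2 (Nat.one_le_iff_ne_zero.2 hN)
  simp only [scale]
  gcongr

theorem scale_le_one {N : ℕ} (hN : N ≠ 0) (k : ℕ) : scale N k ≤ 1 :=
  (scale_antitone hN k.zero_le).trans_eq (scale_zero N)

theorem tsum_lintegral_Ioc_scale_le {N : ℕ} (hN : N ≠ 0) (g : ℝ → ℝ≥0∞) :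
    ∑' k, ∫⁻ t in Ioc (scale N (k + 1)) (scale N k), g t ≤ ∫⁻ t in Ioc (0 : ℝ) 1, g t := by
  have disjoint : Pairwise (Function.onFun Disjoint fun k => Ioc (scale N (k + 1)) (scale N k)) :=
    (scale_antitone hN).pairwise_disjoint_on_Ioc_succ
  rw [← lintegral_iUnion (fun k => measurableSet_Ioc) disjoint]
  exact lintegral_mono_set (iUnion_subset fun k =>
    Ioc_subset_Ioc (scale_pos hN _).le (scale_le_one hN k))

theorem tsum_mul_le_mul_weightedIntegral {N : ℕ} (hN : N ≠ 0) {φ : ℝ → ℝ≥0∞} {θ : ℝ}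
    {w : ℕ → ℝ≥0∞} {C : ℝ≥0∞}
    (h : ∀ k, w k ≤ C * ∫⁻ t in Ioc (scale N (k + 1)) (scale N k),
      ENNReal.ofReal (t ^ (-θ) / t) * φ t) :
    ∑' k, w k ≤ C * weightedIntegral θ φ :=
  (ENNReal.tsum_le_tsum h).trans <| by
    rw [ENNReal.tsum_mul_left]
    exact mul_le_mul_right (tsum_lintegral_Ioc_scale_le hN _) C

theorem exists_natCast_rpow_mem_Icc {θ : ℝ} (hθ : 0 < θ) (hθ1 : θ ≤ 1) :
    ∃ N : ℕ, 1 < N ∧ (N : ℝ) ^ θ ∈ Icc 2 4 := by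
  have hr : 1 ≤ θ⁻¹ := (one_le_inv₀ hθ).2 hθ1
  have two_le : (2 : ℝ) ≤ 2 ^ θ⁻¹ := by
    simpa using Real.rpow_le_rpow_of_exponent_le one_le_two hr
  have le_ceil : (2 : ℝ) ^ θ⁻¹ ≤ ⌈(2 : ℝ) ^ θ⁻¹⌉₊ := Nat.le_ceil _
  have ceil_le : (⌈(2 : ℝ) ^ θ⁻¹⌉₊ : ℝ) ≤ 4 ^ θ⁻¹ := by
    have four_rpow : (4 : ℝ) ^ θ⁻¹ = 2 ^ θ⁻¹ * 2 ^ θ⁻¹ := by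
      rw [← Real.mul_rpow zero_le_two zero_le_two]
      norm_num
    nlinarith [Nat.ceil_lt_add_one (zero_le_two.trans two_le)]
  refine ⟨⌈(2 : ℝ) ^ θ⁻¹⌉₊, by exact_mod_cast two_le.trans le_ceil, ?_, ?_⟩
  · simpa [Real.rpow_inv_rpow zero_le_two hθ.ne'] using
      Real.rpow_le_rpow (by positivity) le_ceil hθ.le
  · simpa [Real.rpow_inv_rpow zero_le_four hθ.ne'] using
      Real.rpow_le_rpow (by positivity) ceil_le hθ.le

theorem le_eight_mul_one_sub_inv {X : ℝ} (hX : X ∈ Icc 2 4) : X ≤ 8 * (1 - X⁻¹) := by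
  obtain ⟨two_le, le_four⟩ := hX
  have hX₀ : 0 < X := by linarith
  rw [← mul_le_mul_iff_left₀ hX₀, mul_assoc, sub_mul, inv_mul_cancel₀ hX₀.ne']
  nlinarith

theorem scale_rpow_mul_le_lintegral {φ : ℝ → ℝ≥0∞} (hφ : Monotone φ) {θ : ℝ} (hθ : 0 < θ)
    {N : ℕ} (hN : N ≠ 0) (hX : (N : ℝ) ^ θ ∈ Icc 2 4) (k : ℕ) :
    ENNReal.ofReal (scale N (k + 2) ^ (-θ)) * φ (scale N (k + 1))
      ≤ 8 * ENNReal.ofReal θ * ∫⁻ t in Ioc (scale N (k + 1)) (scale N k),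
          ENNReal.ofReal (t ^ (-θ) / t) * φ t := by
  set X := (N : ℝ) ^ θ
  have hX₀ : 0 < X := zero_lt_two.trans_le hX.1
  have coeff_le : scale N (k + 2) ^ (-θ)
      ≤ 8 * (scale N (k + 1) ^ (-θ) - scale N k ^ (-θ)) := by
    simp only [scale_rpow_neg]
    calc X ^ (k + 2) = X ^ (k + 1) * X := pow_succ _ _
      _ ≤ X ^ (k + 1) * (8 * (1 - X⁻¹)) := by gcongr; exact le_eight_mul_one_sub_inv hX
      _ = 8 * (X ^ (k + 1) - X ^ k) := by rw [pow_succ]; field_simp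
  calc ENNReal.ofReal (scale N (k + 2) ^ (-θ)) * φ (scale N (k + 1))
      ≤ 8 * (ENNReal.ofReal (scale N (k + 1) ^ (-θ) - scale N k ^ (-θ))
          * φ (scale N (k + 1))) := by
        rw [← mul_assoc, ← ENNReal.ofReal_ofNat 8, ← ENNReal.ofReal_mul (by norm_num)]
        gcongr
    _ ≤ _ := by
        rw [mul_assoc]
        gcongr 8 * ?_
        exact rpow_sub_mul_le_lintegral hφ hθ (scale_pos hN _) (scale_antitone hN k.le_succ)

theorem tsum_scale_succ_rpow_mul_le {φ : ℝ → ℝ≥0∞} (hφ : Monotone φ) {θ : ℝ} (hθ : 0 < θ)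
    (hθ_le : θ ≤ 1 / 2) {N : ℕ} (hN : N ≠ 0) (hX : (N : ℝ) ^ θ ∈ Icc 2 4) :
    ∑' k, ENNReal.ofReal (scale N (k + 1) ^ (-θ)) * φ (scale N k)
      ≤ 32 * (φ 1 + ENNReal.ofReal (θ * (1 - θ)) * weightedIntegral θ φ) :=
  calc ∑' k, ENNReal.ofReal (scale N (k + 1) ^ (-θ)) * φ (scale N k)
      = ENNReal.ofReal ((N : ℝ) ^ θ) * φ 1
        + ∑' k, ENNReal.ofReal (scale N (k + 2) ^ (-θ)) * φ (scale N (k + 1)) := by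
        rw [tsum_eq_zero_add' ENNReal.summable, scale_rpow_neg, scale_zero, zero_add, pow_one]
    _ ≤ ENNReal.ofReal 32 * φ 1
        + ENNReal.ofReal 32 * (ENNReal.ofReal (θ * (1 - θ)) * weightedIntegral θ φ) := by
        gcongr
        · linarith [hX.2]
        · refine (tsum_mul_le_mul_weightedIntegral hN
            (scale_rpow_mul_le_lintegral hφ hθ hN hX)).trans ?_
          rw [← mul_assoc, ← ENNReal.ofReal_ofNat 8, ← ENNReal.ofReal_mul (by norm_num),
            ← ENNReal.ofReal_mul (by norm_num)]
          gcongr ENNReal.ofReal ?_ * _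
          nlinarith
    _ = _ := by rw [← mul_add, ENNReal.ofReal_ofNat]

theorem IsModulus.scale_rpow_mul_le_lintegral {φ : ℝ → ℝ≥0∞} (hφ : IsModulus φ) {θ : ℝ}
    (hθ : θ < 1) {N : ℕ} (hN : N ≠ 0) (hX : (N : ℝ) ^ (1 - θ) ∈ Icc 2 4) (k : ℕ) :
    ENNReal.ofReal ((N : ℝ) ^ (1 - θ) * scale N k ^ (-θ)) * φ (scale N k)
      ≤ 16 * ENNReal.ofReal (1 - θ) * ∫⁻ t in Ioc (scale N (k + 1)) (scale N k),
          ENNReal.ofReal (t ^ (-θ) / t) * φ t := by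
  set X := (N : ℝ) ^ (1 - θ) with hX_def
  set T := scale N k with hT
  have hX₀ : 0 < X := zero_lt_two.trans_le hX.1
  have hT₀ : 0 < T := scale_pos hN k
  have succ_eq : scale N (k + 1) ^ (1 - θ) = T ^ (1 - θ) * X⁻¹ := by
    rw [hT, ← nat_mul_scale_succ hN k, Real.mul_rpow N.cast_nonneg (scale_pos hN _).le, ← hX_def]
    field_simp
  have coeff_le : X * T ^ (-θ) ≤ 16 * ((T ^ (1 - θ) - scale N (k + 1) ^ (1 - θ)) / (2 * T)) :=
    calc X * T ^ (-θ) ≤ 8 * (1 - X⁻¹) * T ^ (-θ) := by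
          gcongr; exact le_eight_mul_one_sub_inv hX
      _ = 16 * ((T ^ (1 - θ) - scale N (k + 1) ^ (1 - θ)) / (2 * T)) := by
          rw [succ_eq, sub_eq_neg_add 1 θ, Real.rpow_add_one hT₀.ne']; field_simp; ring
  calc ENNReal.ofReal (X * T ^ (-θ)) * φ T
      ≤ 16 * (ENNReal.ofReal ((T ^ (1 - θ) - scale N (k + 1) ^ (1 - θ)) / (2 * T)) * φ T) := by
        rw [← mul_assoc, ← ENNReal.ofReal_ofNat 16, ← ENNReal.ofReal_mul (by norm_num)]
        gcongr
    _ ≤ _ := by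
        rw [mul_assoc]
        gcongr 16 * ?_
        exact hφ.rpow_sub_mul_le_lintegral hθ (scale_pos hN _) (scale_antitone hN k.le_succ)

theorem IsModulus.tsum_nat_mul_scale_rpow_mul_le {φ : ℝ → ℝ≥0∞} (hφ : IsModulus φ) {θ : ℝ}
    (hθ : 1 / 2 ≤ θ) (hθ_lt : θ < 1) {N : ℕ} (hN : N ≠ 0) (hX : (N : ℝ) ^ (1 - θ) ∈ Icc 2 4) :
    ∑' k, N * ENNReal.ofReal (scale N k ^ (-θ)) * φ (scale N (k + 1))
      ≤ 32 * (φ 1 + ENNReal.ofReal (θ * (1 - θ)) * weightedIntegral θ φ) := by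
  have hN₀ : (0 : ℝ) < N := Nat.cast_pos.2 (Nat.pos_of_ne_zero hN)
  have shift_eq (k : ℕ) : N * ENNReal.ofReal (scale N k ^ (-θ))
      = ENNReal.ofReal ((N : ℝ) ^ (1 - θ) * scale N (k + 1) ^ (-θ)) := by
    rw [← ENNReal.ofReal_natCast, ← ENNReal.ofReal_mul hN₀.le, ← nat_mul_scale_succ hN,
      Real.mul_rpow hN₀.le (scale_pos hN _).le, ← mul_assoc, ← Real.rpow_one_add' hN₀.le
      (by linarith), ← sub_eq_add_neg]
  calc ∑' k, N * ENNReal.ofReal (scale N k ^ (-θ)) * φ (scale N (k + 1))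
      ≤ ∑' k, ENNReal.ofReal ((N : ℝ) ^ (1 - θ) * scale N k ^ (-θ)) * φ (scale N k) := by
        simp only [shift_eq]
        exact ENNReal.tsum_comp_le_tsum_of_injective (add_left_injective 1)
          fun k => ENNReal.ofReal ((N : ℝ) ^ (1 - θ) * scale N k ^ (-θ)) * φ (scale N k)
    _ ≤ ENNReal.ofReal 32 * (ENNReal.ofReal (θ * (1 - θ)) * weightedIntegral θ φ) := by
        refine (tsum_mul_le_mul_weightedIntegral hN
          (hφ.scale_rpow_mul_le_lintegral hθ_lt hN hX)).trans ?_
        rw [← mul_assoc, ← ENNReal.ofReal_ofNat 16, ← ENNReal.ofReal_mul (by norm_num),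
          ← ENNReal.ofReal_mul (by norm_num)]
        gcongr ENNReal.ofReal ?_ * _
        nlinarith
    _ ≤ _ := by
        rw [ENNReal.ofReal_ofNat]
        gcongr
        exact le_add_self

/-! ### Steklov means -/

/-- The Steklov mean of `f`: its average over the rectangle with lower left corner `(x, y)` and
side lengths `s` and `t`. -/
def steklov (f : ℝ → ℝ → ℝ) (s t x y : ℝ) : ℝ := ⨍ z in box s t x y, uncurry f z

/-- The Steklov mean of `|f|`, defined in `[0, ∞]` so that no integrability is required. -/
def absSteklov (f : ℝ → ℝ → ℝ) (s t x y : ℝ) : ℝ≥0∞ := ⨍⁻ z in box s t x y, ‖uncurry f z‖ₑ ∂volume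

theorem enorm_steklov_le (f : ℝ → ℝ → ℝ) (s t x y : ℝ) :
    ‖steklov f s t x y‖ₑ ≤ absSteklov f s t x y :=
  enorm_integral_le_lintegral_enorm _

theorem steklov_eq_inv_mul_integral (f : ℝ → ℝ → ℝ) {s t : ℝ} (hs : 0 ≤ s) (ht : 0 ≤ t)
    (x y : ℝ) : steklov f s t x y = (s * t)⁻¹ * ∫ z in box s t x y, uncurry f z := by
  rw [steklov, setAverage_eq, measureReal_def, volume_box hs,
    ENNReal.toReal_ofReal (mul_nonneg hs ht), smul_eq_mul]

theorem absSteklov_eq_lintegral_div (f : ℝ → ℝ → ℝ) {s : ℝ} (hs : 0 ≤ s) (t x y : ℝ) :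
    absSteklov f s t x y = (∫⁻ z in box s t x y, ‖uncurry f z‖ₑ) / ENNReal.ofReal (s * t) := by
  rw [absSteklov, setLAverage_eq, volume_box hs]

theorem integrableOn_box (hf : LocallyIntegrable (uncurry f)) (s t x y : ℝ) :
    IntegrableOn (uncurry f) (box s t x y) :=
  (hf.integrableOn_isCompact (isCompact_Icc.prod isCompact_Icc)).mono_set
    (prod_mono Ioc_subset_Icc_self Ioc_subset_Icc_self)

theorem steklov_swap (f : ℝ → ℝ → ℝ) (s t x y : ℝ) :
    steklov (Function.swap f) t s y x = steklov f s t x y := by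
  have preimage_eq : Prod.swap ⁻¹' box s t x y = box t s y x := preimage_swap_prod _ _
  have integral_eq := (Measure.measurePreserving_swap (μ := (volume : Measure ℝ))
    (ν := (volume : Measure ℝ))).setIntegral_preimage_emb
    MeasurableEquiv.prodComm.measurableEmbedding (uncurry f) (box s t x y)
  have measure_eq := (Measure.measurePreserving_swap (μ := (volume : Measure ℝ))
    (ν := (volume : Measure ℝ))).measure_preimage (measurableSet_box s t x y).nullMeasurableSet
  rw [preimage_eq] at integral_eq measure_eq
  rw [steklov, steklov, setAverage_eq, setAverage_eq, Measure.volume_eq_prod, measureReal_def,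
    measureReal_def, measure_eq, ← integral_eq]
  rfl

theorem absSteklov_swap (f : ℝ → ℝ → ℝ) (s t x y : ℝ) :
    absSteklov (Function.swap f) t s y x = absSteklov f s t x y := by
  have preimage_eq : Prod.swap ⁻¹' box s t x y = box t s y x := preimage_swap_prod _ _
  have lintegral_eq := (Measure.measurePreserving_swap (μ := (volume : Measure ℝ))
    (ν := (volume : Measure ℝ))).setLIntegral_comp_preimage_emb
    MeasurableEquiv.prodComm.measurableEmbedding (fun z => ‖uncurry f z‖ₑ) (box s t x y)
  have measure_eq := (Measure.measurePreserving_swap (μ := (volume : Measure ℝ))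
    (ν := (volume : Measure ℝ))).measure_preimage (measurableSet_box s t x y).nullMeasurableSet
  rw [preimage_eq] at lintegral_eq measure_eq
  rw [absSteklov, absSteklov, setLAverage_eq, setLAverage_eq, Measure.volume_eq_prod, measure_eq,
    ← lintegral_eq]
  rfl

theorem swap_shiftDiff (a b : ℝ) (f : ℝ → ℝ → ℝ) :
    Function.swap (shiftDiff a b f) = shiftDiff b a (Function.swap f) := rfl

theorem locallyIntegrable_swap (hf : LocallyIntegrable (uncurry f)) :
    LocallyIntegrable (uncurry (Function.swap f)) := by
  refine (locallyIntegrable_map_homeomorph (Homeomorph.prodComm ℝ ℝ) (f := uncurry f)).1 ?_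
  exact (Measure.measurePreserving_swap (μ := (volume : Measure ℝ))
    (ν := (volume : Measure ℝ))).map_eq.symm ▸ hf

theorem steklov_translate (f : ℝ → ℝ → ℝ) (a b s t x y : ℝ) :
    steklov (fun x y => f (x + a) (y + b)) s t x y = steklov f s t (x + a) (y + b) := by
  have shift := measurePreserving_add_right (volume : Measure (ℝ × ℝ)) (a, b)
  have integral_eq := shift.setIntegral_preimage_emb (measurableEmbedding_addRight _) (uncurry f)
    (box s t (x + a) (y + b))
  have measure_eq := shift.measure_preimage
    (measurableSet_box s t (x + a) (y + b)).nullMeasurableSet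
  rw [preimage_add_right_box] at integral_eq measure_eq
  rw [steklov, steklov, setAverage_eq, setAverage_eq, measureReal_def, measureReal_def,
    ← measure_eq, ← integral_eq]
  rfl

theorem absSteklov_translate (f : ℝ → ℝ → ℝ) (a b s t x y : ℝ) :
    absSteklov (fun x y => f (x + a) (y + b)) s t x y = absSteklov f s t (x + a) (y + b) := by
  have shift := measurePreserving_add_right (volume : Measure (ℝ × ℝ)) (a, b)
  have lintegral_eq := shift.setLIntegral_comp_preimage_emb (measurableEmbedding_addRight _)
    (fun z => ‖uncurry f z‖ₑ) (box s t (x + a) (y + b))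
  have measure_eq := shift.measure_preimage
    (measurableSet_box s t (x + a) (y + b)).nullMeasurableSet
  rw [preimage_add_right_box] at lintegral_eq measure_eq
  rw [absSteklov, absSteklov, setLAverage_eq, setLAverage_eq, ← measure_eq, ← lintegral_eq]
  rfl

theorem locallyIntegrable_translate (hf : LocallyIntegrable (uncurry f)) (a b : ℝ) :
    LocallyIntegrable (uncurry fun x y => f (x + a) (y + b)) := by
  refine (locallyIntegrable_map_homeomorph (Homeomorph.addRight ((a, b) : ℝ × ℝ))
    (f := uncurry f)).1 ?_
  exact (measurePreserving_add_right (volume : Measure (ℝ × ℝ)) (a, b)).map_eq.symm ▸ hf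

theorem locallyIntegrable_shiftDiff (hf : LocallyIntegrable (uncurry f)) (a b : ℝ) :
    LocallyIntegrable (uncurry (shiftDiff a b f)) :=
  (locallyIntegrable_translate hf a b).sub hf

theorem steklov_shiftDiff (hf : LocallyIntegrable (uncurry f)) (a b s t x y : ℝ) :
    steklov (shiftDiff a b f) s t x y
      = steklov f s t (x + a) (y + b) - steklov f s t x y := by
  rw [← steklov_translate, steklov, steklov, steklov, setAverage_eq, setAverage_eq, setAverage_eq,
    ← smul_sub, ← integral_sub (integrableOn_box (locallyIntegrable_translate hf a b) s t x y)
      (integrableOn_box hf s t x y)]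
  rfl

theorem box_nat_mul_eq_biUnion (n : ℕ) {s : ℝ} (hs : 0 ≤ s) (t x y : ℝ) :
    box (n * s) t x y = ⋃ i ∈ Finset.range n, box s t (x + i * s) y := by
  have grid_mono : Monotone fun i : ℕ => x + i * s := fun i j hij => by
    simp only
    gcongr
  have Ioc_eq := grid_mono.biUnion_Ico_Ioc_map_succ 0 n
  simp only [Nat.succ_eq_succ, Nat.cast_succ, Nat.cast_zero, zero_mul, add_zero, add_one_mul,
    ← add_assoc] at Ioc_eq
  simp only [box, ← Ioc_eq, iUnion_prod_const, Finset.mem_range, mem_Ico, zero_le, true_and]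

theorem pairwise_disjoint_box {s : ℝ} (hs : 0 ≤ s) (t x y : ℝ) :
    Pairwise (Function.onFun Disjoint fun i : ℕ => box s t (x + i * s) y) := fun i j hij => by
  have grid_mono : Monotone fun i : ℕ => x + i * s := fun i j hij => by
    simp only
    gcongr
  have disjoint := grid_mono.pairwise_disjoint_on_Ioc_succ hij
  simp only [Function.onFun, Nat.succ_eq_succ, Nat.cast_succ, add_one_mul, ← add_assoc] at disjoint
  exact disjoint_prod.2 (Or.inl disjoint)

theorem steklov_nat_mul (hf : LocallyIntegrable (uncurry f)) (n : ℕ) {s t : ℝ} (hs : 0 ≤ s)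
    (ht : 0 ≤ t) (x y : ℝ) :
    steklov f (n * s) t x y
      = (n : ℝ)⁻¹ * ∑ i ∈ Finset.range n, steklov f s t (x + i * s) y := by
  simp only [steklov_eq_inv_mul_integral f hs ht,
    steklov_eq_inv_mul_integral f (mul_nonneg n.cast_nonneg hs) ht, ← Finset.mul_sum]
  rw [box_nat_mul_eq_biUnion n hs, integral_biUnion_finset _ (fun i _ => measurableSet_box _ _ _ _)
    ((pairwise_disjoint_box hs t x y).set_pairwise _) (fun i _ => integrableOn_box hf _ _ _ _),
    mul_assoc, mul_inv, mul_assoc]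

theorem sum_absSteklov (f : ℝ → ℝ → ℝ) {n : ℕ} (hn : n ≠ 0) {s : ℝ} (hs : 0 ≤ s) (t x y : ℝ) :
    ∑ i ∈ Finset.range n, absSteklov f s t (x + i * s) y = n * absSteklov f (n * s) t x y := by
  have hn_ne : (n : ℝ≥0∞) ≠ 0 := Nat.cast_ne_zero.2 hn
  simp only [absSteklov_eq_lintegral_div f hs,
    absSteklov_eq_lintegral_div f (mul_nonneg n.cast_nonneg hs)]
  rw [box_nat_mul_eq_biUnion n hs, lintegral_biUnion_finset
    ((pairwise_disjoint_box hs t x y).set_pairwise _) (fun i _ => measurableSet_box _ _ _ _),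
    mul_assoc (n : ℝ), ENNReal.ofReal_mul n.cast_nonneg, ENNReal.ofReal_natCast, ← mul_div_assoc,
    ENNReal.mul_div_mul_left _ _ hn_ne (ENNReal.natCast_ne_top n)]
  simp only [div_eq_mul_inv, Finset.sum_mul]

theorem absSteklov_shiftDiff_nat_mul_le (hf : Measurable (uncurry f)) {i n : ℕ} (hn : n ≠ 0)
    (hi : i ≤ n) {s : ℝ} (hs : 0 ≤ s) (t x y : ℝ) :
    absSteklov (shiftDiff (i * s) 0 f) s t x y
      ≤ n * absSteklov (shiftDiff s 0 f) (n * s) t x y := by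
  have pointwise (z : ℝ × ℝ) : ‖uncurry (shiftDiff (i * s) 0 f) z‖ₑ
      ≤ ∑ l ∈ Finset.range i,
          ‖uncurry (fun x y => shiftDiff s 0 f (x + l * s) (y + 0)) z‖ₑ := by
    have telescope := shiftDiff_nat_mul i s 0 f z.1 z.2
    simp only [mul_zero] at telescope
    exact (congrArg _ telescope).trans_le (enorm_sum_le _ _)
  calc absSteklov (shiftDiff (i * s) 0 f) s t x y
      ≤ ∑ l ∈ Finset.range i,
          absSteklov (fun x y => shiftDiff s 0 f (x + l * s) (y + 0)) s t x y := by
        simp only [absSteklov, laverage_eq']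
        rw [← lintegral_finsetSum _ fun l _ =>
          (measurable_translate (measurable_shiftDiff hf s 0) _ _).enorm]
        exact lintegral_mono pointwise
    _ ≤ ∑ l ∈ Finset.range n,
          absSteklov (fun x y => shiftDiff s 0 f (x + l * s) (y + 0)) s t x y :=
        Finset.sum_le_sum_of_subset (Finset.range_subset_range.2 hi)
    _ = n * absSteklov (shiftDiff s 0 f) (n * s) t x y := by
        simp only [absSteklov_translate]
        simp only [add_zero, sum_absSteklov _ hn hs]

theorem enorm_inv_mul_sum_le {n : ℕ} {a : ℕ → ℝ} {B : ℝ≥0∞} (ha : ∀ i < n, ‖a i‖ₑ ≤ B) :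
    ‖(n : ℝ)⁻¹ * ∑ i ∈ Finset.range n, a i‖ₑ ≤ B := by
  rcases eq_or_ne n 0 with rfl | hn
  · simp
  calc ‖(n : ℝ)⁻¹ * ∑ i ∈ Finset.range n, a i‖ₑ
      ≤ (n : ℝ≥0∞)⁻¹ * ∑ _i ∈ Finset.range n, B := by
        rw [enorm_mul, enorm_inv (Nat.cast_ne_zero.2 hn), Real.enorm_natCast]
        gcongr
        exact (enorm_sum_le _ _).trans
          (Finset.sum_le_sum fun i hi => ha i (Finset.mem_range.1 hi))
    _ = B := by
        rw [Finset.sum_const, Finset.card_range, nsmul_eq_mul, ← mul_assoc,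
          ENNReal.inv_mul_cancel (Nat.cast_ne_zero.2 hn) (ENNReal.natCast_ne_top n), one_mul]

theorem steklov_nat_mul_sub (hf : LocallyIntegrable (uncurry f)) {n : ℕ} (hn : n ≠ 0) {s t : ℝ}
    (hs : 0 ≤ s) (ht : 0 ≤ t) (x y : ℝ) :
    steklov f (n * s) t x y - steklov f s t x y
      = (n : ℝ)⁻¹ * ∑ i ∈ Finset.range n, steklov (shiftDiff (i * s) 0 f) s t x y := by
  simp only [steklov_shiftDiff hf, add_zero, Finset.sum_sub_distrib, mul_sub,
    ← steklov_nat_mul hf n hs ht, Finset.sum_const, Finset.card_range, nsmul_eq_mul,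
    inv_mul_cancel_left₀ (Nat.cast_ne_zero (R := ℝ).2 hn)]

theorem enorm_steklov_nat_mul_sub_le (hf : LocallyIntegrable (uncurry f)) {n : ℕ} (hn : n ≠ 0)
    {s t : ℝ} (hs : 0 ≤ s) (ht : 0 ≤ t) (x y : ℝ) {B : ℝ≥0∞}
    (hB : ∀ i < n, absSteklov (shiftDiff (i * s) 0 f) s t x y ≤ B) :
    ‖steklov f (n * s) t x y - steklov f s t x y‖ₑ ≤ B := by
  rw [steklov_nat_mul_sub hf hn hs ht]
  exact enorm_inv_mul_sum_le fun i hi => (enorm_steklov_le _ _ _ _ _).trans (hB i hi)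

theorem enorm_steklov_nat_mul_sub_le' (hf : LocallyIntegrable (uncurry f)) {n : ℕ} (hn : n ≠ 0)
    {s t : ℝ} (hs : 0 ≤ s) (ht : 0 ≤ t) (x y : ℝ) {B : ℝ≥0∞}
    (hB : ∀ j < n, absSteklov (shiftDiff 0 (j * t) f) s t x y ≤ B) :
    ‖steklov f s (n * t) x y - steklov f s t x y‖ₑ ≤ B := by
  simp only [← steklov_swap f, ← absSteklov_swap _ s t, swap_shiftDiff] at hB ⊢
  exact enorm_steklov_nat_mul_sub_le (locallyIntegrable_swap hf) hn ht hs y x hB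

theorem enorm_steklov_nat_mul_sub_sub_le (hf : LocallyIntegrable (uncurry f)) {m n : ℕ}
    (hm : m ≠ 0) (hn : n ≠ 0) {s t : ℝ} (hs : 0 ≤ s) (ht : 0 ≤ t) (x y : ℝ) {B : ℝ≥0∞}
    (hB : ∀ i < m, ∀ j < n,
      absSteklov (shiftDiff 0 (j * t) (shiftDiff (i * s) 0 f)) s t x y ≤ B) :
    ‖steklov f (m * s) (n * t) x y - steklov f s (n * t) x y
      - (steklov f (m * s) t x y - steklov f s t x y)‖ₑ ≤ B := by
  rw [steklov_nat_mul_sub hf hm hs (mul_nonneg n.cast_nonneg ht),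
    steklov_nat_mul_sub hf hm hs ht, ← mul_sub, ← Finset.sum_sub_distrib]
  exact enorm_inv_mul_sum_le fun i hi =>
    enorm_steklov_nat_mul_sub_le' (locallyIntegrable_shiftDiff hf _ _) hn hs ht x y (hB i hi)

theorem absSteklov_le_rpow_mul_lpNorm2 (hp : 1 ≤ p) (hf : Measurable (uncurry f))
    (hper : BiPeriodic f) {s t : ℝ} (hs : s ∈ Ioc 0 1) (ht : t ∈ Ioc 0 1) (x y : ℝ) :
    absSteklov f s t x y
      ≤ ENNReal.ofReal (s ^ (-(1 / p))) * (ENNReal.ofReal (t ^ (-(1 / p))) * lpNorm2 p f) := by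
  have hp₀ : 0 < p := one_pos.trans_le hp
  have hst : 0 < s * t := mul_pos hs.1 ht.1
  have volume_ne_zero : volume (box s t x y) ≠ 0 := by simpa [volume_box hs.1.le] using hst
  have volume_ne_top : volume (box s t x y) ≠ ⊤ := by simp [volume_box hs.1.le]
  have : IsProbabilityMeasure ((volume (box s t x y))⁻¹ • volume.restrict (box s t x y)) :=
    ⟨by simp [ENNReal.inv_mul_cancel volume_ne_zero volume_ne_top]⟩
  have scaling : (volume (box s t x y))⁻¹ ^ (1 / ENNReal.ofReal p).toReal
      = ENNReal.ofReal (s ^ (-(1 / p))) * ENNReal.ofReal (t ^ (-(1 / p))) := by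
    rw [volume_box hs.1.le, ← ENNReal.ofReal_mul (Real.rpow_nonneg hs.1.le _),
      ← Real.mul_rpow hs.1.le ht.1.le, ← ENNReal.ofReal_rpow_of_pos hst, ENNReal.rpow_neg,
      ENNReal.inv_rpow, one_div, one_div, ENNReal.toReal_inv, ENNReal.toReal_ofReal hp₀.le]
  calc absSteklov f s t x y
      = eLpNorm (uncurry f) 1 ((volume (box s t x y))⁻¹ • volume.restrict (box s t x y)) := by
        rw [absSteklov, laverage_eq', eLpNorm_one_eq_lintegral_enorm, Measure.restrict_apply_univ]
    _ ≤ eLpNorm (uncurry f) (ENNReal.ofReal p)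
          ((volume (box s t x y))⁻¹ • volume.restrict (box s t x y)) :=
        eLpNorm_le_eLpNorm_of_exponent_le (ENNReal.one_le_ofReal.2 hp) hf.aestronglyMeasurable
    _ = ENNReal.ofReal (s ^ (-(1 / p))) * (ENNReal.ofReal (t ^ (-(1 / p)))
          * eLpNorm (uncurry f) (ENNReal.ofReal p) (volume.restrict (box s t x y))) := by
        rw [eLpNorm_smul_measure_of_ne_top ENNReal.ofReal_ne_top, scaling, smul_eq_mul, mul_assoc]
    _ ≤ _ := by
        rw [lpNorm2_eq_eLpNorm_box hp₀ hf hper x y]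
        gcongr
        exact prod_mono (Ioc_subset_Ioc_right (by linarith [hs.2]))
          (Ioc_subset_Ioc_right (by linarith [ht.2]))

theorem MemLp2.locallyIntegrable (hp : 1 ≤ p) (hf : MemLp2 p f) :
    LocallyIntegrable (uncurry f) := by
  obtain ⟨hmeas, hper, hfin⟩ := hf
  rintro ⟨x, y⟩
  refine ⟨box 1 1 (x - 1 / 2) (y - 1 / 2), prod_mem_nhds (Ioc_mem_nhds (by linarith) (by linarith))
    (Ioc_mem_nhds (by linarith) (by linarith)), ?_⟩
  have : IsFiniteMeasure (volume.restrict (box 1 1 (x - 1 / 2) (y - 1 / 2))) :=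
    ⟨by simp [volume_box zero_le_one]⟩
  rw [lpNorm2_eq_eLpNorm_box (one_pos.trans_le hp) hmeas hper (x - 1 / 2) (y - 1 / 2)] at hfin
  exact MemLp.integrable (ENNReal.one_le_ofReal.2 hp) ⟨hmeas.aestronglyMeasurable, hfin⟩

theorem setOf_mem_box_eq (s t : ℝ) (z : ℝ × ℝ) :
    {w : ℝ × ℝ | z ∈ box s t w.1 w.2} = Ico (z.1 - s) z.1 ×ˢ Ico (z.2 - t) z.2 := by
  ext w
  simp only [box, mem_ofPred_eq, mem_prod, mem_Ioc, mem_Ico, sub_le_iff_le_add]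
  tauto

theorem ae_notMem_frontier_setOf_mem_box {s t : ℝ} (hs : 0 < s) (ht : 0 < t) (w : ℝ × ℝ) :
    ∀ᵐ z : ℝ × ℝ, w ∉ frontier {w : ℝ × ℝ | z ∈ box s t w.1 w.2} := by
  have hfst : ∀ᵐ z : ℝ × ℝ, z.1 ∉ ({w.1, w.1 + s} : Set ℝ) :=
    Measure.quasiMeasurePreserving_fst.ae ((Set.toFinite _).countable.ae_notMem volume)
  have hsnd : ∀ᵐ z : ℝ × ℝ, z.2 ∉ ({w.2, w.2 + t} : Set ℝ) :=
    Measure.quasiMeasurePreserving_snd.ae ((Set.toFinite _).countable.ae_notMem volume)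
  filter_upwards [hfst, hsnd] with z hz₁ hz₂ hw
  rw [setOf_mem_box_eq, frontier_prod_eq, frontier_Ico (sub_lt_self _ hs),
    frontier_Ico (sub_lt_self _ ht)] at hw
  simp only [mem_insert_iff, mem_singleton_iff, mem_union, mem_prod] at hz₁ hz₂ hw
  grind

theorem continuous_steklov (hf : LocallyIntegrable (uncurry f)) {s t : ℝ} (hs : 0 < s)
    (ht : 0 < t) : Continuous (uncurry (steklov f s t)) := by
  have continuous_integral :
      Continuous fun w : ℝ × ℝ => ∫ z, (box s t w.1 w.2).indicator (uncurry f) z := by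
    refine continuous_iff_continuousAt.2 fun w => continuousAt_of_dominated
      (bound := fun z => ‖(box (s + 2) (t + 2) (w.1 - 1) (w.2 - 1)).indicator (uncurry f) z‖) ?_ ?_
      ((integrableOn_box hf _ _ _ _).integrable_indicator (measurableSet_box _ _ _ _)).norm ?_
    · exact .of_forall fun v => hf.aestronglyMeasurable.indicator (measurableSet_box _ _ _ _)
    · filter_upwards [prod_mem_nhds (Icc_mem_nhds (sub_one_lt w.1) (lt_add_one w.1))
        (Icc_mem_nhds (sub_one_lt w.2) (lt_add_one w.2))] with v ⟨hv₁, hv₂⟩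
      refine .of_forall fun z => ?_
      rw [norm_indicator_eq_indicator_norm, norm_indicator_eq_indicator_norm]
      refine indicator_le_indicator_of_subset (prod_mono (Ioc_subset_Ioc hv₁.1 ?_)
        (Ioc_subset_Ioc hv₂.1 ?_)) (fun _ => norm_nonneg _) z
      · linarith [hv₁.2]
      · linarith [hv₂.2]
    · filter_upwards [ae_notMem_frontier_setOf_mem_box hs ht w] with z hz
      exact continuousOn_const.continuousAt_indicator (f := fun _ => uncurry f z) hz
  refine (continuous_integral.const_mul (s * t)⁻¹).congr fun w => ?_
  rw [integral_indicator (measurableSet_box _ _ _ _), ← steklov_eq_inv_mul_integral f hs.le ht.le]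
  rfl

theorem steklov_eq_setAverage_closedBall (f : ℝ → ℝ → ℝ) (t x y : ℝ) :
    steklov f t t x y
      = ⨍ z in Metric.closedBall ((x + t / 2, y + t / 2) : ℝ × ℝ) (t / 2), uncurry f z := by
  have Icc_eq (x : ℝ) : Icc (x + t / 2 - t / 2) (x + t / 2 + t / 2) = Icc x (x + t) := by
    rw [add_sub_cancel_right, add_assoc, add_halves]
  rw [steklov, ← closedBall_prod_same, Real.closedBall_eq_Icc, Real.closedBall_eq_Icc, Icc_eq,
    Icc_eq]
  refine setAverage_congr ?_
  rw [Measure.volume_eq_prod]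
  exact Measure.set_prod_ae_eq Ioc_ae_eq_Icc Ioc_ae_eq_Icc

theorem ae_tendsto_steklov (hf : LocallyIntegrable (uncurry f)) {ι : Type*} {l : Filter ι}
    {T : ι → ℝ} (hT : Tendsto T l (nhdsWithin 0 (Ioi 0))) :
    ∀ᵐ z : ℝ × ℝ, Tendsto (fun i => steklov f (T i) (T i) z.1 z.2) l (nhds (f z.1 z.2)) := by
  have : (volume : Measure (ℝ × ℝ)).IsAddHaarMeasure := by
    rw [Measure.volume_eq_prod]
    infer_instance
  obtain ⟨T_tendsto, T_pos⟩ := tendsto_nhdsWithin_iff.1 hT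
  have radius_tendsto : Tendsto (fun i => T i / 2) l (nhdsWithin 0 (Ioi 0)) := by
    refine tendsto_nhdsWithin_iff.2 ⟨by simpa using T_tendsto.div_const 2, ?_⟩
    filter_upwards [T_pos] with i hi using half_pos (mem_Ioi.1 hi)
  filter_upwards [IsUnifLocDoublingMeasure.ae_tendsto_average _ hf 1] with z hz
  simp only [steklov_eq_setAverage_closedBall]
  refine hz _ _ radius_tendsto ?_
  filter_upwards [T_pos] with i hi
  have := half_pos (mem_Ioi.1 hi)
  rw [one_mul, ← closedBall_prod_same, Real.closedBall_eq_Icc, Real.closedBall_eq_Icc]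
  refine ⟨⟨?_, ?_⟩, ⟨?_, ?_⟩⟩ <;> linarith

/-! ### Scales adapted to the exponent -/

/-- Geometric scales `N⁻ᵏ` at which the differences of Steklov means sum to the weighted integral
of a modulus of continuity. A difference of step at most `N⁻ᵏ`, averaged at scale `N⁻ᵏ⁻¹`, is
controlled by the modulus at `τ k` with coefficient `c k`, after being replaced by a difference
of step `σ ≤ τ k` averaged at some scale `s`. -/
structure AdaptedScales (p : ℝ) (N : ℕ) (c : ℕ → ℝ≥0∞) (τ : ℕ → ℝ) : Prop where
  one_lt : 1 < N
  tsum_le {φ : ℝ → ℝ≥0∞} (hφ : IsModulus φ) :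
    ∑' k, c k * φ (τ k)
      ≤ 32 * (φ 1 + ENNReal.ofReal (1 / p * (1 - 1 / p)) * weightedIntegral (1 / p) φ)
  exists_absSteklov_le (k : ℕ) {i : ℕ} (hi : i < N) :
    ∃ K : ℝ≥0∞, ∃ σ ∈ Icc 0 (τ k), ∃ s ∈ Ioc (0 : ℝ) 1,
      K * ENNReal.ofReal (s ^ (-(1 / p))) = c k ∧
      ∀ f : ℝ → ℝ → ℝ, Measurable (uncurry f) → ∀ t x y,
        absSteklov (shiftDiff (i * scale N (k + 1)) 0 f) (scale N (k + 1)) t x y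
          ≤ K * absSteklov (shiftDiff σ 0 f) s t x y

theorem adaptedScales_of_two_le (hp : 2 ≤ p) {N : ℕ} (hN : 1 < N)
    (hX : (N : ℝ) ^ (1 / p) ∈ Icc 2 4) :
    AdaptedScales p N (fun k => ENNReal.ofReal (scale N (k + 1) ^ (-(1 / p)))) (scale N) where
  one_lt := hN
  tsum_le hφ :=
    tsum_scale_succ_rpow_mul_le hφ.mono (by positivity) (by gcongr)
      (one_pos.trans hN).ne' hX
  exists_absSteklov_le k i hi := by
    have hN₀ : N ≠ 0 := (one_pos.trans hN).ne'
    have hs := scale_pos hN₀ (k + 1)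
    refine ⟨1, i * scale N (k + 1), ⟨by positivity, ?_⟩, scale N (k + 1),
      ⟨hs, scale_le_one hN₀ _⟩, one_mul _, fun f _ t x y => (one_mul _).ge⟩
    rw [← nat_mul_scale_succ hN₀ k]
    gcongr

theorem adaptedScales_of_le_two (hp₁ : 1 < p) (hp₂ : p ≤ 2) {N : ℕ} (hN : 1 < N)
    (hX : (N : ℝ) ^ (1 - 1 / p) ∈ Icc 2 4) :
    AdaptedScales p N (fun k => N * ENNReal.ofReal (scale N k ^ (-(1 / p))))
      (fun k => scale N (k + 1)) where
  one_lt := hN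
  tsum_le hφ := hφ.tsum_nat_mul_scale_rpow_mul_le (by gcongr)
    ((div_lt_one (one_pos.trans hp₁)).2 hp₁) (one_pos.trans hN).ne' hX
  exists_absSteklov_le k i hi := by
    have hN₀ : N ≠ 0 := (one_pos.trans hN).ne'
    have hs := (scale_pos hN₀ (k + 1)).le
    refine ⟨N, scale N (k + 1), ⟨hs, le_rfl⟩, scale N k, ⟨scale_pos hN₀ k, scale_le_one hN₀ k⟩,
      rfl, fun f hf t x y => ?_⟩
    rw [← nat_mul_scale_succ hN₀ k]
    exact absSteklov_shiftDiff_nat_mul_le hf hN₀ hi.le hs t x y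

/-- The ratio of the scales has to grow as `p → ∞` and as `p → 1`, so that the constants in the
estimates stay independent of `p`. -/
theorem exists_adaptedScales (hp : 1 < p) : ∃ N c τ, AdaptedScales p N c τ := by
  have hp₀ : 0 < p := one_pos.trans hp
  rcases le_total 2 p with hp₂ | hp₂
  · obtain ⟨N, hN, hX⟩ := exists_natCast_rpow_mem_Icc (one_div_pos.2 hp₀)
      ((div_le_one hp₀).2 hp.le)
    exact ⟨N, _, _, adaptedScales_of_two_le hp₂ hN hX⟩
  · obtain ⟨N, hN, hX⟩ := exists_natCast_rpow_mem_Icc (sub_pos.2 ((div_lt_one hp₀).2 hp))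
      (sub_le_self 1 (by positivity))
    exact ⟨N, _, _, adaptedScales_of_le_two hp hp₂ hN hX⟩

namespace AdaptedScales

variable {N : ℕ} {c : ℕ → ℝ≥0∞} {τ : ℕ → ℝ}

theorem ne_zero (h : AdaptedScales p N c τ) : N ≠ 0 := (one_pos.trans h.one_lt).ne'

theorem exists_absSteklov_le' (h : AdaptedScales p N c τ) (k : ℕ) {j : ℕ} (hj : j < N) :
    ∃ K : ℝ≥0∞, ∃ σ ∈ Icc 0 (τ k), ∃ t ∈ Ioc (0 : ℝ) 1,
      K * ENNReal.ofReal (t ^ (-(1 / p))) = c k ∧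
      ∀ f : ℝ → ℝ → ℝ, Measurable (uncurry f) → ∀ s x y,
        absSteklov (shiftDiff 0 (j * scale N (k + 1)) f) s (scale N (k + 1)) x y
          ≤ K * absSteklov (shiftDiff 0 σ f) s t x y := by
  obtain ⟨K, σ, hσ, t, ht, hK, hle⟩ := h.exists_absSteklov_le k hj
  refine ⟨K, σ, hσ, t, ht, hK, fun f hf s x y => ?_⟩
  simpa only [← swap_shiftDiff, absSteklov_swap] using
    hle (Function.swap f) (hf.comp measurable_swap) s y x

theorem absSteklov_fst_le (h : AdaptedScales p N c τ) (hp : 1 ≤ p) (hf : Measurable (uncurry f))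
    (hper : BiPeriodic f) (k : ℕ) {i : ℕ} (hi : i < N) (x y : ℝ) :
    absSteklov (shiftDiff (i * scale N (k + 1)) 0 f) (scale N (k + 1)) 1 x y
      ≤ c k * modulus2 p f (τ k) := by
  obtain ⟨K, σ, hσ, s, hs, hK, hle⟩ := h.exists_absSteklov_le k hi
  have holder := absSteklov_le_rpow_mul_lpNorm2 hp (measurable_shiftDiff hf σ 0)
    (hper.shiftDiff σ 0) hs (right_mem_Ioc.2 one_pos) x y
  rw [Real.one_rpow, ENNReal.ofReal_one, one_mul] at holder
  have modulus_le : lpNorm2 p (shiftDiff σ 0 f) ≤ modulus2 p f (τ k) :=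
    lpNorm2_shiftDiff_le_modulus2 p f (by simpa [Real.sqrt_sq hσ.1] using hσ.2)
  rw [← hK, mul_assoc]
  refine (hle f hf 1 x y).trans ?_
  gcongr
  exact holder.trans (by gcongr)

theorem absSteklov_snd_le (h : AdaptedScales p N c τ) (hp : 1 ≤ p) (hf : Measurable (uncurry f))
    (hper : BiPeriodic f) (k : ℕ) {j : ℕ} (hj : j < N) (x y : ℝ) :
    absSteklov (shiftDiff 0 (j * scale N (k + 1)) f) 1 (scale N (k + 1)) x y
      ≤ c k * modulus2 p f (τ k) := by
  obtain ⟨K, σ, hσ, t, ht, hK, hle⟩ := h.exists_absSteklov_le' k hj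
  have holder := absSteklov_le_rpow_mul_lpNorm2 hp (measurable_shiftDiff hf 0 σ)
    (hper.shiftDiff 0 σ) (right_mem_Ioc.2 one_pos) ht x y
  rw [Real.one_rpow, ENNReal.ofReal_one, one_mul] at holder
  have modulus_le : lpNorm2 p (shiftDiff 0 σ f) ≤ modulus2 p f (τ k) :=
    lpNorm2_shiftDiff_le_modulus2 p f (by simpa [Real.sqrt_sq hσ.1] using hσ.2)
  rw [← hK, mul_assoc]
  refine (hle f hf 1 x y).trans ?_
  gcongr
  exact holder.trans (by gcongr)

theorem absSteklov_mixed_le (h : AdaptedScales p N c τ) (hp : 1 ≤ p)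
    (hf : Measurable (uncurry f)) (hper : BiPeriodic f) (k l : ℕ) {i j : ℕ} (hi : i < N)
    (hj : j < N) (x y : ℝ) :
    absSteklov (shiftDiff 0 (j * scale N (l + 1)) (shiftDiff (i * scale N (k + 1)) 0 f))
        (scale N (k + 1)) (scale N (l + 1)) x y
      ≤ c k * (c l * mixedModulus p f (τ k) (τ l)) := by
  obtain ⟨K, σ, hσ, s, hs, hK, hle⟩ := h.exists_absSteklov_le k hi
  obtain ⟨K', σ', hσ', t, ht, hK', hle'⟩ := h.exists_absSteklov_le' l hj
  calc _ ≤ K' * absSteklov (shiftDiff 0 σ' (shiftDiff (i * scale N (k + 1)) 0 f))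
          (scale N (k + 1)) t x y := hle' _ (measurable_shiftDiff hf _ _) _ x y
    _ ≤ K' * (K * absSteklov (shiftDiff 0 σ' (shiftDiff σ 0 f)) s t x y) := by
        rw [shiftDiff_comm, shiftDiff_comm 0 σ' σ 0]
        gcongr
        exact hle _ (measurable_shiftDiff hf _ _) t x y
    _ ≤ K' * (K * (ENNReal.ofReal (s ^ (-(1 / p))) * (ENNReal.ofReal (t ^ (-(1 / p)))
          * lpNorm2 p (shiftDiff 0 σ' (shiftDiff σ 0 f))))) := by
        gcongr
        exact absSteklov_le_rpow_mul_lpNorm2 hp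
          (measurable_shiftDiff (measurable_shiftDiff hf _ _) _ _)
          ((hper.shiftDiff _ _).shiftDiff _ _) hs ht x y
    _ = c k * (c l * lpNorm2 p (shiftDiff 0 σ' (shiftDiff σ 0 f))) := by
        rw [← hK, ← hK']
        ring
    _ ≤ c k * (c l * mixedModulus p f (τ k) (τ l)) := by
        gcongr
        exact lpNorm2_shiftDiff_le_mixedModulus p f hσ hσ'

theorem tsum_modulus2_le (h : AdaptedScales p N c τ) (hp : 1 ≤ p) (hf : Measurable (uncurry f))
    (hper : BiPeriodic f) :
    ∑' k, c k * modulus2 p f (τ k)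
      ≤ 32 * (2 * lpNorm2 p f + ENNReal.ofReal (1 / p * (1 - 1 / p)) * Jp p f) := by
  rw [Jp_eq_weightedIntegral]
  refine (h.tsum_le (isModulus_modulus2 hp hf hper)).trans ?_
  gcongr
  exact modulus2_le_lpNorm2 hp hf hper 1

theorem tsum_tsum_mixedModulus_le (h : AdaptedScales p N c τ) (hp : 1 ≤ p)
    (hf : Measurable (uncurry f)) (hper : BiPeriodic f) :
    ∑' k, ∑' l, c k * (c l * mixedModulus p f (τ k) (τ l))
      ≤ 1024 * (4 * lpNorm2 p f + 4 * (ENNReal.ofReal (1 / p * (1 - 1 / p)) * Jp p f)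
        + ENNReal.ofReal (1 / p * (1 - 1 / p)) ^ 2 * Ip p f) := by
  set q := ENNReal.ofReal (1 / p * (1 - 1 / p))
  let W := weightedIntegral (1 / p)
  have edge_fst : W (fun u => mixedModulus p f u 1) ≤ 2 * Jp p f := by
    rw [Jp_eq_weightedIntegral, ← weightedIntegral_const_mul _ (by simp)]
    exact weightedIntegral_mono _ fun u => mixedModulus_le_modulus2_fst hp hf hper u 1
  have edge_snd : W (mixedModulus p f 1) ≤ 2 * Jp p f := by
    rw [Jp_eq_weightedIntegral, ← weightedIntegral_const_mul _ (by simp)]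
    exact weightedIntegral_mono _ fun v => mixedModulus_le_modulus2_snd hp hf hper 1 v
  calc ∑' k, ∑' l, c k * (c l * mixedModulus p f (τ k) (τ l))
      ≤ ∑' k, c k * (32 * (mixedModulus p f (τ k) 1 + q * W (mixedModulus p f (τ k)))) := by
        gcongr with k
        rw [ENNReal.tsum_mul_left]
        gcongr
        exact h.tsum_le (isModulus_mixedModulus_snd hp hf hper (τ k))
    _ = 32 * (∑' k, c k * mixedModulus p f (τ k) 1
          + q * ∑' k, c k * W (mixedModulus p f (τ k))) := by
        simp only [← ENNReal.tsum_mul_left, ← ENNReal.tsum_add]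
        exact tsum_congr fun k => by ring
    _ ≤ 32 * (32 * (mixedModulus p f 1 1 + q * W fun u => mixedModulus p f u 1)
          + q * (32 * (W (mixedModulus p f 1) + q * W fun u => W (mixedModulus p f u)))) := by
        gcongr
        · exact h.tsum_le (isModulus_mixedModulus_fst hp hf hper 1)
        · exact h.tsum_le (isModulus_weightedIntegral _ (isModulus_mixedModulus_fst hp hf hper))
    _ ≤ 32 * (32 * (4 * lpNorm2 p f + q * (2 * Jp p f))
          + q * (32 * (2 * Jp p f + q * Ip p f))) := by
        rw [Ip_eq_weightedIntegral]
        gcongr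
        exact mixedModulus_le_lpNorm2 hp hf hper 1 1
    _ = _ := by ring

end AdaptedScales

/-! ### Convergence of the diagonal Steklov means -/

/-- The mixed second difference of a doubly indexed sequence. -/
def rectDiff {E : Type*} [AddCommGroup E] (A : ℕ → ℕ → E) (k l : ℕ) : E :=
  A (k + 1) (l + 1) - A k (l + 1) - (A (k + 1) l - A k l)

theorem diagonal_eq_sum {E : Type*} [AddCommGroup E] (A : ℕ → ℕ → E) (n : ℕ) :
    A n n = A 0 0 + ∑ k ∈ Finset.range n, (A (k + 1) 0 - A k 0)
      + ∑ l ∈ Finset.range n, (A 0 (l + 1) - A 0 l)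
      + ∑ z ∈ Finset.range n ×ˢ Finset.range n, rectDiff A z.1 z.2 := by
  have row_sum (k : ℕ) : ∑ l ∈ Finset.range n, rectDiff A k l
      = A (k + 1) n - A k n - (A (k + 1) 0 - A k 0) :=
    Finset.sum_range_sub (fun l => A (k + 1) l - A k l) n
  rw [Finset.sum_product]
  simp only [row_sum, Finset.sum_sub_distrib (f := fun k => A (k + 1) n - A k n),
    Finset.sum_range_sub (A 0), Finset.sum_range_sub fun k => A k n]
  abel

theorem tendsto_range_product_range_atTop :
    Tendsto (fun n => Finset.range n ×ˢ Finset.range n) atTop atTop :=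
  tendsto_atTop_finset_of_monotone
    (fun _ _ hmn => Finset.product_subset_product (Finset.range_mono hmn) (Finset.range_mono hmn))
    fun z => ⟨z.1 + z.2 + 1, by simp only [Finset.mem_product, Finset.mem_range]; lia⟩

section UniformLimit

variable {X E : Type*} [NormedAddCommGroup E]

theorem enorm_tsum_le_of_enorm_le {ι : Type*} {a : ι → E} {u : ι → ℝ≥0∞}
    (ha : ∀ i, ‖a i‖ₑ ≤ u i) : ‖∑' i, a i‖ₑ ≤ ∑' i, u i :=
  enorm_tsum_le_tsum_enorm.trans (ENNReal.tsum_le_tsum ha)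

variable [CompleteSpace E]

theorem summable_of_enorm_le {ι : Type*} {a : ι → E} {u : ι → ℝ≥0∞} (ha : ∀ i, ‖a i‖ₑ ≤ u i)
    (hu : ∑' i, u i ≠ ⊤) : Summable a :=
  .of_norm_bounded (ENNReal.summable_toReal hu) fun i => by
    rw [← toReal_enorm]
    exact ENNReal.toReal_mono (ENNReal.ne_top_of_tsum_ne_top hu i) (ha i)

variable [TopologicalSpace X]

theorem continuous_tsum_of_enorm_le {ι : Type*} {F : ι → X → E} {u : ι → ℝ≥0∞}
    (hF : ∀ i, Continuous (F i)) (hFu : ∀ i x, ‖F i x‖ₑ ≤ u i) (hu : ∑' i, u i ≠ ⊤) :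
    Continuous fun x => ∑' i, F i x :=
  continuous_tsum hF (ENNReal.summable_toReal hu) fun i x => by
    rw [← toReal_enorm]
    exact ENNReal.toReal_mono (ENNReal.ne_top_of_tsum_ne_top hu i) (hFu i x)

theorem exists_continuous_tendsto_diagonal {A : ℕ → ℕ → X → E} (hA : ∀ k l, Continuous (A k l))
    {a b : ℕ → ℝ≥0∞} {m : ℕ → ℕ → ℝ≥0∞} (ha : ∀ k x, ‖A (k + 1) 0 x - A k 0 x‖ₑ ≤ a k)
    (hb : ∀ l x, ‖A 0 (l + 1) x - A 0 l x‖ₑ ≤ b l)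
    (hm : ∀ k l x, ‖rectDiff (fun k l => A k l x) k l‖ₑ ≤ m k l) (ha_fin : ∑' k, a k ≠ ⊤)
    (hb_fin : ∑' l, b l ≠ ⊤) (hm_fin : ∑' k, ∑' l, m k l ≠ ⊤) :
    ∃ g : X → E, Continuous g ∧ (∀ x, Tendsto (fun n => A n n x) atTop (nhds (g x))) ∧
      ∀ x, ‖g x‖ₑ ≤ ‖A 0 0 x‖ₑ + ∑' k, a k + ∑' l, b l + ∑' k, ∑' l, m k l := by
  rw [← ENNReal.tsum_prod] at hm_fin ⊢
  refine ⟨fun x => A 0 0 x + ∑' k, (A (k + 1) 0 x - A k 0 x) + ∑' l, (A 0 (l + 1) x - A 0 l x)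
    + ∑' z : ℕ × ℕ, rectDiff (fun k l => A k l x) z.1 z.2, ?_, fun x => ?_, fun x => ?_⟩
  · have continuous_rectDiff (z : ℕ × ℕ) :
        Continuous fun x => rectDiff (fun k l => A k l x) z.1 z.2 :=
      ((hA _ _).sub (hA _ _)).sub ((hA _ _).sub (hA _ _))
    exact (((hA 0 0).add
      (continuous_tsum_of_enorm_le (fun k => (hA _ _).sub (hA _ _)) ha ha_fin)).add
      (continuous_tsum_of_enorm_le (fun l => (hA _ _).sub (hA _ _)) hb hb_fin)).add
      (continuous_tsum_of_enorm_le continuous_rectDiff (fun z => hm z.1 z.2) hm_fin)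
  · refine Tendsto.congr (fun n => (diagonal_eq_sum (fun k l => A k l x) n).symm) ?_
    have tendsto_fst := (summable_of_enorm_le (ha · x) ha_fin).hasSum.tendsto_sum_nat
    have tendsto_snd := (summable_of_enorm_le (hb · x) hb_fin).hasSum.tendsto_sum_nat
    have tendsto_mixed := (summable_of_enorm_le (fun z : ℕ × ℕ => hm z.1 z.2 x) hm_fin).hasSum.comp
      tendsto_range_product_range_atTop
    exact ((tendsto_const_nhds.add tendsto_fst).add tendsto_snd).add tendsto_mixed
  · refine (enorm_add_le _ _).trans (add_le_add ((enorm_add_le _ _).trans (add_le_add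
      ((enorm_add_le _ _).trans (add_le_add_right ?_ _)) ?_)) ?_)
    · exact enorm_tsum_le_of_enorm_le (ha · x)
    · exact enorm_tsum_le_of_enorm_le (hb · x)
    · exact enorm_tsum_le_of_enorm_le fun z : ℕ × ℕ => hm z.1 z.2 x

end UniformLimit

theorem tendsto_scale {N : ℕ} (hN : 1 < N) : Tendsto (scale N) atTop (nhdsWithin 0 (Ioi 0)) :=
  tendsto_inv_atTop_nhdsGT_zero.comp (tendsto_pow_atTop_atTop_of_one_lt (Nat.one_lt_cast.2 hN))

namespace AdaptedScales

variable {N : ℕ} {c : ℕ → ℝ≥0∞} {τ : ℕ → ℝ}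

theorem enorm_steklov_sub_fst_le (h : AdaptedScales p N c τ) (hp : 1 ≤ p) (hf : MemLp2 p f)
    (k : ℕ) (x y : ℝ) :
    ‖steklov f (scale N (k + 1)) 1 x y - steklov f (scale N k) 1 x y‖ₑ
      ≤ c k * modulus2 p f (τ k) := by
  rw [enorm_sub_rev, ← nat_mul_scale_succ h.ne_zero k]
  exact enorm_steklov_nat_mul_sub_le (hf.locallyIntegrable hp) h.ne_zero
    (scale_pos h.ne_zero _).le zero_le_one x y
    fun i hi => h.absSteklov_fst_le hp hf.1 hf.2.1 k hi x y

theorem enorm_steklov_sub_snd_le (h : AdaptedScales p N c τ) (hp : 1 ≤ p) (hf : MemLp2 p f)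
    (l : ℕ) (x y : ℝ) :
    ‖steklov f 1 (scale N (l + 1)) x y - steklov f 1 (scale N l) x y‖ₑ
      ≤ c l * modulus2 p f (τ l) := by
  rw [enorm_sub_rev, ← nat_mul_scale_succ h.ne_zero l]
  exact enorm_steklov_nat_mul_sub_le' (hf.locallyIntegrable hp) h.ne_zero zero_le_one
    (scale_pos h.ne_zero _).le x y
    fun j hj => h.absSteklov_snd_le hp hf.1 hf.2.1 l hj x y

theorem enorm_rectDiff_steklov_le (h : AdaptedScales p N c τ) (hp : 1 ≤ p) (hf : MemLp2 p f)
    (k l : ℕ) (x y : ℝ) :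
    ‖rectDiff (fun k l => steklov f (scale N k) (scale N l) x y) k l‖ₑ
      ≤ c k * (c l * mixedModulus p f (τ k) (τ l)) := by
  have increment_le := enorm_steklov_nat_mul_sub_sub_le (hf.locallyIntegrable hp) h.ne_zero
    h.ne_zero (scale_pos h.ne_zero (k + 1)).le (scale_pos h.ne_zero (l + 1)).le x y
    fun i hi j hj => h.absSteklov_mixed_le hp hf.1 hf.2.1 k l hi hj x y
  rw [nat_mul_scale_succ h.ne_zero, nat_mul_scale_succ h.ne_zero] at increment_le
  convert increment_le using 2
  rw [rectDiff]
  ring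

theorem exists_continuous_ae_eq (h : AdaptedScales p N c τ) (hp : 1 ≤ p) (hf : MemLp2 p f)
    (hedge : ∑' k, c k * modulus2 p f (τ k) ≠ ⊤)
    (hmixed : ∑' k, ∑' l, c k * (c l * mixedModulus p f (τ k) (τ l)) ≠ ⊤) :
    ∃ g : ℝ → ℝ → ℝ, Continuous (uncurry g) ∧ (∀ᵐ z : ℝ × ℝ, f z.1 z.2 = g z.1 z.2) ∧
      ∀ x y, ‖g x y‖ₑ ≤ lpNorm2 p f + ∑' k, c k * modulus2 p f (τ k)
        + ∑' k, c k * modulus2 p f (τ k)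
        + ∑' k, ∑' l, c k * (c l * mixedModulus p f (τ k) (τ l)) := by
  have hloc := hf.locallyIntegrable hp
  have edge_fst (k : ℕ) (z : ℝ × ℝ) := h.enorm_steklov_sub_fst_le hp hf k z.1 z.2
  have edge_snd (l : ℕ) (z : ℝ × ℝ) := h.enorm_steklov_sub_snd_le hp hf l z.1 z.2
  have mixed (k l : ℕ) (z : ℝ × ℝ) := h.enorm_rectDiff_steklov_le hp hf k l z.1 z.2
  rw [← scale_zero N] at edge_fst edge_snd
  obtain ⟨g, g_cont, g_lim, g_le⟩ := exists_continuous_tendsto_diagonal (E := ℝ)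
    (A := fun k l (z : ℝ × ℝ) => steklov f (scale N k) (scale N l) z.1 z.2)
    (fun k l => continuous_steklov hloc (scale_pos h.ne_zero k) (scale_pos h.ne_zero l))
    edge_fst edge_snd mixed hedge hedge hmixed
  refine ⟨fun x y => g (x, y), g_cont, ?_, fun x y => (g_le (x, y)).trans ?_⟩
  · filter_upwards [ae_tendsto_steklov hloc (tendsto_scale h.one_lt)] with z hz
    exact tendsto_nhds_unique hz (g_lim z)
  · have one_mem : (1 : ℝ) ∈ Ioc 0 1 := right_mem_Ioc.2 one_pos
    have corner := (enorm_steklov_le f 1 1 x y).trans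
      (absSteklov_le_rpow_mul_lpNorm2 hp hf.1 hf.2.1 one_mem one_mem x y)
    rw [Real.one_rpow, ENNReal.ofReal_one, one_mul, one_mul] at corner
    gcongr
    simpa only [scale_zero] using corner

end AdaptedScales

theorem exists_continuous_ae_eq_of_Jp_of_Ip (hp : 1 < p) (hf : MemLp2 p f) (hJ : Jp p f < ⊤)
    (hI : Ip p f < ⊤) :
    ∃ g : ℝ → ℝ → ℝ, Continuous (uncurry g) ∧ (∀ᵐ z : ℝ × ℝ, f z.1 z.2 = g z.1 z.2) ∧
      ∀ x y, ‖g x y‖ₑ ≤ 4225 * (lpNorm2 p f + ENNReal.ofReal (1 / p * (1 - 1 / p)) * Jp p f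
        + ENNReal.ofReal (1 / p * (1 - 1 / p)) ^ 2 * Ip p f) := by
  obtain ⟨hmeas, hper, hfin⟩ := id hf
  obtain ⟨N, c, τ, h⟩ := exists_adaptedScales hp
  have edge_le := h.tsum_modulus2_le hp.le hmeas hper
  have mixed_le := h.tsum_tsum_mixedModulus_le hp.le hmeas hper
  obtain ⟨g, g_cont, g_eq, g_le⟩ := h.exists_continuous_ae_eq hp.le hf
    (edge_le.trans_lt (by finiteness)).ne (mixed_le.trans_lt (by finiteness)).ne
  refine ⟨g, g_cont, g_eq, fun x y => (g_le x y).trans ?_⟩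
  set q := ENNReal.ofReal (1 / p * (1 - 1 / p))
  set L := lpNorm2 p f
  set J := Jp p f
  set I := Ip p f
  calc _ ≤ L + 32 * (2 * L + q * J) + 32 * (2 * L + q * J)
          + 1024 * (4 * L + 4 * (q * J) + q ^ 2 * I) := by gcongr
    _ = 4225 * L + 4160 * (q * J) + 1024 * (q ^ 2 * I) := by ring
    _ ≤ 4225 * L + 4225 * (q * J) + 4225 * (q ^ 2 * I) := by gcongr <;> norm_num
    _ = 4225 * (L + q * J + q ^ 2 * I) := by ring

theorem supNorm2_le {g : ℝ → ℝ → ℝ} (hfg : ∀ᵐ z : ℝ × ℝ, f z.1 z.2 = g z.1 z.2) {B : ℝ≥0∞}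
    (hg : ∀ x y, ‖g x y‖ₑ ≤ B) : supNorm2 f ≤ B := by
  refine essSup_le_of_ae_le _ (ae_restrict_of_ae ?_)
  filter_upwards [hfg] with z hz
  rw [hz, ← Real.enorm_eq_ofReal_abs]
  exact hg z.1 z.2

theorem one_div_mul_conjExponent (hp : p ≠ 0) :
    1 / (p * (p / (p - 1))) = 1 / p * (1 - 1 / p) := by
  field_simp

end

/-- If `1 < p < ∞`, `f ∈ L^p([0,1]²)`, `J_p(f) < ∞` and `I_p(f) < ∞`,
then `f` agrees a.e. with a continuous function and
`‖f‖_∞ ≤ A [‖f‖_p + (1/(pp')) J_p(f) + (1/(pp'))² I_p(f)]` for an absolute constant `A`. -/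
theorem statement0 :
    ∃ A : ℝ, 0 < A ∧
      ∀ (p : ℝ), 1 < p → ∀ f : ℝ → ℝ → ℝ,
        MemLp2 p f → Jp p f < ⊤ → Ip p f < ⊤ →
          (∃ g : ℝ → ℝ → ℝ, Continuous (Function.uncurry g) ∧
              ∀ᵐ z : ℝ × ℝ ∂volume, f z.1 z.2 = g z.1 z.2) ∧
          supNorm2 f ≤ ENNReal.ofReal A *
            (lpNorm2 p f
              + ENNReal.ofReal (1 / (p * (p / (p - 1)))) * Jp p f
              + ENNReal.ofReal ((1 / (p * (p / (p - 1)))) ^ 2) * Ip p f) := by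
  refine ⟨4225, by norm_num, fun p hp f hf hJ hI => ?_⟩
  obtain ⟨g, g_cont, hfg, g_le⟩ := exists_continuous_ae_eq_of_Jp_of_Ip hp hf hJ hI
  refine ⟨⟨g, g_cont, hfg⟩, ?_⟩
  have coefficient_nonneg : 0 ≤ 1 / p * (1 - 1 / p) :=
    mul_nonneg (by positivity) (sub_nonneg.2 ((div_le_one (by positivity)).2 hp.le))
  rw [one_div_mul_conjExponent (by positivity), ENNReal.ofReal_pow coefficient_nonneg,
    ENNReal.ofReal_ofNat]
  exact supNorm2_le hfg g_le
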